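/- arXiv:2209.11075 — 3 statements merged into one kernel-verified Lean document; each statement's English description precedes it below -/
import Mathlib

section
/- Let r and s be integers with s ≠ 0, set α := r/s, let b be a positive integer, c := gcd(r, s, b), b' := b/c, and s' := s/c. Let n ∈ ℤ be such that (q^r; q^s)_n is well-defined and non-zero. Then v_{φ_b}((q^r; q^s)_n) = ⌊c·n/b − D_{b'}(α) − ⌊1−α⌋/b'⌋ + 1 if gcd(s', b') = 1, and v_{φ_b}((q^r; q^s)_n) = 0 otherwise. -/
open Polynomial
open scoped Classical

noncomputable section

/-- The generalized Dwork map `D_b(α)`: the unique rational whose reduced denominator is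
coprime to `b` and such that `b·D_b(α) − α ∈ {0, 1, …, b−1}`. -/
def dwork (b : ℕ) (α : ℚ) : ℚ :=
  if h : ∃ θ : ℚ, Nat.Coprime θ.den b ∧ ∃ k : ℤ, 0 ≤ k ∧ k < (b : ℤ) ∧ (b : ℚ) * θ - α = (k : ℚ)
  then h.choose else 0

/-- `α ∈ ℤ_{≤0}`. -/
def IsNonPosInt (α : ℚ) : Prop := ∃ m : ℤ, m ≤ 0 ∧ α = (m : ℚ)

/-- `α ∈ ℤ_{>0}`. -/
def IsPosInt (α : ℚ) : Prop := ∃ m : ℤ, 0 < m ∧ α = (m : ℚ)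

/-- `𝔫_α`. -/
def frakn (α : ℚ) : ℤ := if 0 ≤ α then α.num else |α.num| + 1

/-- `⟨x⟩`: the fractional part of `x` if `x ∉ ℤ`, and `1` if `x ∈ ℤ`. -/
def cangle (x : ℝ) : ℝ := if ∃ m : ℤ, x = (m : ℝ) then 1 else Int.fract x

/-- Christol order `x ⪯ y`. -/
def cle (x y : ℝ) : Prop := cangle x < cangle y ∨ (cangle x = cangle y ∧ y ≤ x)

/-- The step function `δ_b(r, s, ·)`. -/
def qdelta (b : ℕ) (r s : ℤ) (x : ℝ) : ℤ :=
  if Int.gcd (s / (Nat.gcd (Int.gcd r s) b : ℤ)) (((b / Nat.gcd (Int.gcd r s) b : ℕ)) : ℤ) = 1 then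
    ⌊(Nat.gcd (Int.gcd r s) b : ℝ) * x
        - ((dwork (b / Nat.gcd (Int.gcd r s) b) ((r : ℚ) / (s : ℚ)) : ℚ) : ℝ)
        - ((⌊1 - (r : ℚ) / (s : ℚ)⌋ : ℤ) : ℝ) / ((b / Nat.gcd (Int.gcd r s) b : ℕ) : ℝ)⌋ + 1
  else 0

/-- The Landau-type step function `Δ_b^{𝐫,𝐭}`. -/
def qDeltaFn {v w : ℕ} (b : ℕ) (rr : Fin v → ℤ × ℤ) (tt : Fin w → ℤ × ℤ) (x : ℝ) : ℤ :=
  (∑ i, qdelta b (rr i).1 (rr i).2 x) - (∑ j, qdelta b (tt j).1 (tt j).2 x)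

/-- The q-Pochhammer symbol `(q^r; q^s)_n` for `n ∈ ℕ`, inside `ℚ(q)`. -/
def qPoch (r s : ℤ) (n : ℕ) : RatFunc ℚ :=
  ∏ i ∈ Finset.range n, (1 - RatFunc.X ^ (r + s * (i : ℤ)))

/-- The q-Pochhammer symbol `(q^r; q^s)_n` for `n ∈ ℤ`. -/
def qPochZ (r s : ℤ) (n : ℤ) : RatFunc ℚ :=
  if 0 ≤ n then qPoch r s n.toNat else (qPoch (r - s) (-s) (-n).toNat)⁻¹

/-- Multiplicity of `p` in `g`: the largest `k` with `p^k ∣ g`. -/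
def polyMult (p g : Polynomial ℚ) : ℕ := sSup {k : ℕ | p ^ k ∣ g}

/-- The valuation `v_{φ_b}` on `ℚ(q)` attached to the `b`-th cyclotomic polynomial. -/
def cycVal (b : ℕ) (f : RatFunc ℚ) : ℤ :=
  (polyMult (cyclotomic b ℚ) f.num : ℤ) - (polyMult (cyclotomic b ℚ) f.denom : ℤ)

/-- The image of an integer polynomial in `ℚ(q)`. -/
def polyZ (g : Polynomial ℤ) : RatFunc ℚ :=
  algebraMap (Polynomial ℚ) (RatFunc ℚ) (g.map (Int.castRingHom ℚ))

/-- `f ∈ ℤ[q⁻¹, q]`. -/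
def IsIntLaurent (f : RatFunc ℚ) : Prop :=
  ∃ (m : ℕ) (g : Polynomial ℤ), f * RatFunc.X ^ m = polyZ g

/-- `f ∈ ℤ[q]`. -/
def IsIntPoly (f : RatFunc ℚ) : Prop := ∃ g : Polynomial ℤ, f = polyZ g

/-- The ratio attached to a pair of integers. -/
def ratOf (p : ℤ × ℤ) : ℚ := (p.1 : ℚ) / (p.2 : ℚ)

/-- The q-hypergeometric term `Q_{𝐫,𝐭}(q; n)`, `n ∈ ℕ`. -/
def qHyp {v w : ℕ} (rr : Fin v → ℤ × ℤ) (tt : Fin w → ℤ × ℤ) (n : ℕ) : RatFunc ℚ :=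
  (∏ i, qPoch (rr i).1 (rr i).2 n) / (∏ j, qPoch (tt j).1 (tt j).2 n)

/-- The q-hypergeometric term `Q_{𝐫,𝐭}(q; n)`, `n ∈ ℤ`. -/
def qHypZ {v w : ℕ} (rr : Fin v → ℤ × ℤ) (tt : Fin w → ℤ × ℤ) (n : ℤ) : RatFunc ℚ :=
  (∏ i, qPochZ (rr i).1 (rr i).2 n) / (∏ j, qPochZ (tt j).1 (tt j).2 n)

/-- `c := gcd(r, s, b)`. -/
def cOf (p : ℤ × ℤ) (b : ℕ) : ℕ := Nat.gcd (Int.gcd p.1 p.2) b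

/-- Membership in `V_b` (resp. `W_b`): `gcd(s, b) = gcd(r, s, b)`. -/
def inV (p : ℤ × ℤ) (b : ℕ) : Prop := Nat.gcd p.2.natAbs b = cOf p b

/-- `d_{𝐫,𝐭}`: the lcm of all the `s_i` and `u_j`. -/
def dRT {v w : ℕ} (rr : Fin v → ℤ × ℤ) (tt : Fin w → ℤ × ℤ) : ℕ :=
  Nat.lcm (Finset.univ.lcm fun i => ((rr i).2).natAbs)
    (Finset.univ.lcm fun j => ((tt j).2).natAbs)

/-- `b̃`: the greatest divisor of `b` coprime to `d`. -/
def btilde (d b : ℕ) : ℕ := Nat.findGreatest (fun k => k ∣ b ∧ Nat.Coprime k d) b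

/-- The unique `a ∈ {1,…,d}` with `a·b̃ ≡ 1 (mod d)`. -/
def aOf (d b : ℕ) : ℕ :=
  if h : ∃ a, 1 ≤ a ∧ a ≤ d ∧ (a * btilde d b) % d = 1 % d then h.choose else 1

/-- The representative of `b` modulo `d` lying in `{1,…,d}`. -/
def repMod (d b : ℕ) : ℕ := if b % d = 0 then d else b % d

/-- The jump abscissa `(⟨e·α⟩ + k)/c − ⌊1 − a·α⌋`. -/
def jumpPt (p : ℤ × ℤ) (b : ℕ) (a ei : ℤ) (k : ℕ) : ℝ :=
  (cangle (((ei : ℚ) * ratOf p : ℚ) : ℝ) + (k : ℝ)) / (cOf p b : ℝ)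
    - ((⌊1 - (a : ℚ) * ratOf p⌋ : ℤ) : ℝ)

/-- Number of pairs `(i,k)` with jump abscissa `⪯ x` coming from one pair `p`. -/
def XiCount (p : ℤ × ℤ) (b : ℕ) (a ei : ℤ) (x : ℝ) : ℕ :=
  if inV p b then ((Finset.range (cOf p b)).filter fun k => cle (jumpPt p b a ei k) x).card else 0

/-- The generalized Christol step function `Ξ_{𝐫,𝐭}(b, ·)`, relative to choices `e`, `f`. -/
def Xi {v w : ℕ} (rr : Fin v → ℤ × ℤ) (tt : Fin w → ℤ × ℤ) (b : ℕ)
    (e : Fin v → ℤ) (f : Fin w → ℤ) (x : ℝ) : ℤ :=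
  (∑ i, (XiCount (rr i) b ((aOf (dRT rr tt) b : ℕ) : ℤ) (e i) x : ℤ))
    - (∑ j, (XiCount (tt j) b ((aOf (dRT rr tt) b : ℕ) : ℤ) (f j) x : ℤ))

/-- `ei` is an admissible choice for the pair `p` and `b`: positive with `b·ei ≡ c (mod s)`. -/
def goodChoice (p : ℤ × ℤ) (b : ℕ) (ei : ℤ) : Prop :=
  inV p b → 0 < ei ∧ p.2 ∣ ((b : ℤ) * ei - (cOf p b : ℤ))

end

section PolyMult

variable {p g h : Polynomial ℚ}

theorem polyMult_eq_multiplicity (hp : Prime p) (hg : g ≠ 0) :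
    polyMult p g = multiplicity p g := by
  have hfin : FiniteMultiplicity p g := FiniteMultiplicity.of_prime_left hp hg
  have hset : {k : ℕ | p ^ k ∣ g} = Set.Iic (multiplicity p g) := by
    ext k
    exact hfin.pow_dvd_iff_le_multiplicity
  rw [polyMult, hset, csSup_Iic]

theorem polyMult_mul (hp : Prime p) (hg : g ≠ 0) (hh : h ≠ 0) :
    polyMult p (g * h) = polyMult p g + polyMult p h := by
  rw [polyMult_eq_multiplicity hp hg, polyMult_eq_multiplicity hp hh,
    polyMult_eq_multiplicity hp (mul_ne_zero hg hh)]
  exact multiplicity_mul hp (FiniteMultiplicity.of_prime_left hp (mul_ne_zero hg hh))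

theorem polyMult_eq_zero (hp : Prime p) (hg : g ≠ 0) (hpg : ¬ p ∣ g) : polyMult p g = 0 := by
  rw [polyMult_eq_multiplicity hp hg]
  exact multiplicity_eq_zero.mpr hpg

theorem polyMult_eq_one (hp : Prime p) (hg : Squarefree g) (hpg : p ∣ g) : polyMult p g = 1 := by
  rw [polyMult_eq_multiplicity hp hg.ne_zero]
  refine multiplicity_eq_of_dvd_of_not_dvd (by simpa using hpg) fun hsq => ?_
  exact hp.not_isUnit (hg p (by simpa [pow_two] using hsq))

end PolyMult

section CycVal

variable {b : ℕ}

theorem prime_cyclotomic_rat (hb : 0 < b) : Prime (cyclotomic b ℚ) :=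
  (cyclotomic.irreducible_rat hb).prime

theorem cycVal_div (hb : 0 < b) {f g : Polynomial ℚ} (hf : f ≠ 0) (hg : g ≠ 0) :
    cycVal b (algebraMap _ (RatFunc ℚ) f / algebraMap _ (RatFunc ℚ) g) =
      (polyMult (cyclotomic b ℚ) f : ℤ) - polyMult (cyclotomic b ℚ) g := by
  have hp := prime_cyclotomic_rat hb
  set x := algebraMap _ (RatFunc ℚ) f / algebraMap _ (RatFunc ℚ) g with hx
  have hx0 : x ≠ 0 := div_ne_zero (RatFunc.algebraMap_ne_zero hf) (RatFunc.algebraMap_ne_zero hg)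
  have hcross : x.num * g = f * x.denom := by
    apply RatFunc.algebraMap_injective ℚ
    have h := RatFunc.num_div_denom x
    nth_rewrite 3 [hx] at h
    rw [div_eq_div_iff (RatFunc.algebraMap_ne_zero x.denom_ne_zero)
      (RatFunc.algebraMap_ne_zero hg)] at h
    rwa [map_mul, map_mul]
  have hmul := congrArg (polyMult (cyclotomic b ℚ)) hcross
  rw [polyMult_mul hp (RatFunc.num_ne_zero hx0) hg, polyMult_mul hp hf x.denom_ne_zero] at hmul
  unfold cycVal
  omega

theorem cycVal_mul (hb : 0 < b) {x y : RatFunc ℚ} (hx : x ≠ 0) (hy : y ≠ 0) :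
    cycVal b (x * y) = cycVal b x + cycVal b y := by
  have hp := prime_cyclotomic_rat hb
  have hxn := RatFunc.num_ne_zero hx
  have hyn := RatFunc.num_ne_zero hy
  conv_lhs => rw [← RatFunc.num_div_denom x, ← RatFunc.num_div_denom y, div_mul_div_comm,
    ← map_mul, ← map_mul]
  rw [cycVal_div hb (mul_ne_zero hxn hyn) (mul_ne_zero x.denom_ne_zero y.denom_ne_zero),
    polyMult_mul hp hxn hyn, polyMult_mul hp x.denom_ne_zero y.denom_ne_zero]
  unfold cycVal
  push_cast
  ring

theorem cycVal_one (hb : 0 < b) : cycVal b 1 = 0 := by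
  simpa using cycVal_mul hb (one_ne_zero (α := RatFunc ℚ)) one_ne_zero

theorem cycVal_inv (hb : 0 < b) {x : RatFunc ℚ} (hx : x ≠ 0) :
    cycVal b x⁻¹ = -cycVal b x := by
  have h := cycVal_mul hb hx (inv_ne_zero hx)
  rw [mul_inv_cancel₀ hx, cycVal_one hb] at h
  omega

theorem cycVal_prod (hb : 0 < b) {ι : Type*} (t : Finset ι) (f : ι → RatFunc ℚ)
    (hf : ∀ i ∈ t, f i ≠ 0) : cycVal b (∏ i ∈ t, f i) = ∑ i ∈ t, cycVal b (f i) := by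
  induction t using Finset.cons_induction with
  | empty => simpa using cycVal_one hb
  | cons a t ha ih =>
    rw [Finset.prod_cons, Finset.sum_cons, cycVal_mul hb (hf a (Finset.mem_cons_self a t))
      (Finset.prod_ne_zero_iff.mpr fun i hi => hf i (Finset.mem_cons_of_mem hi)),
      ih fun i hi => hf i (Finset.mem_cons_of_mem hi)]

theorem cyclotomic_rat_dvd_X_pow_sub_one_iff (hb : 0 < b) {k : ℕ} (hk : 0 < k) :
    cyclotomic b ℚ ∣ X ^ k - 1 ↔ b ∣ k := by
  constructor
  · intro h
    rw [← prod_cyclotomic_eq_X_pow_sub_one hk ℚ] at h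
    obtain ⟨d, hd, hbd⟩ := (prime_cyclotomic_rat hb).exists_mem_finset_dvd h
    have hassoc := (prime_cyclotomic_rat hb).irreducible.associated_of_dvd
      (cyclotomic.irreducible_rat (Nat.pos_of_mem_divisors hd)) hbd
    have heq := eq_of_monic_of_associated (cyclotomic.monic b ℚ) (cyclotomic.monic d ℚ) hassoc
    rw [cyclotomic_injective heq]
    exact Nat.dvd_of_mem_divisors hd
  · rintro ⟨d, rfl⟩
    refine (cyclotomic.dvd_X_pow_sub_one b ℚ).trans ?_
    simpa [pow_mul] using sub_dvd_pow_sub_pow (X ^ b : ℚ[X]) 1 d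

theorem polyMult_cyclotomic_X_pow_sub_one (hb : 0 < b) {k : ℕ} (hk : 0 < k) :
    polyMult (cyclotomic b ℚ) (X ^ k - 1) = if b ∣ k then 1 else 0 := by
  have hsep : (X ^ k - 1 : ℚ[X]).Separable :=
    X_pow_sub_one_separable_iff.mpr (by exact_mod_cast hk.ne')
  split_ifs with h
  · exact polyMult_eq_one (prime_cyclotomic_rat hb) hsep.squarefree
      ((cyclotomic_rat_dvd_X_pow_sub_one_iff hb hk).mpr h)
  · exact polyMult_eq_zero (prime_cyclotomic_rat hb) hsep.squarefree.ne_zero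
      (mt (cyclotomic_rat_dvd_X_pow_sub_one_iff hb hk).mp h)

theorem polyMult_cyclotomic_X_pow (hb : 0 < b) (k : ℕ) :
    polyMult (cyclotomic b ℚ) (X ^ k) = 0 := by
  have hp := prime_cyclotomic_rat hb
  refine polyMult_eq_zero hp (pow_ne_zero k X_ne_zero) fun h => hp.not_isUnit ?_
  have hX : cyclotomic b ℚ ∣ X ^ b := (hp.dvd_of_dvd_pow h).trans (dvd_pow_self X hb.ne')
  exact isUnit_of_dvd_one (by simpa using dvd_sub hX (cyclotomic.dvd_X_pow_sub_one b ℚ))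

theorem X_pow_sub_one_ne_zero_of_pos {k : ℕ} (hk : 0 < k) : (X ^ k - 1 : ℚ[X]) ≠ 0 :=
  (monic_X_pow_sub_C (1 : ℚ) hk.ne').ne_zero

theorem exists_one_sub_X_zpow_eq_div {m : ℤ} (hm : m ≠ 0) :
    ∃ (u : Polynomial ℚ) (j : ℕ), IsUnit u ∧ 1 - RatFunc.X ^ m =
      algebraMap ℚ[X] (RatFunc ℚ) (u * (X ^ m.natAbs - 1)) /
        algebraMap ℚ[X] (RatFunc ℚ) (X ^ j) := by
  rcases le_or_gt 0 m with h | h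
  · refine ⟨-1, 0, isUnit_one.neg, ?_⟩
    lift m to ℕ using h
    simp
  · refine ⟨1, m.natAbs, isUnit_one, ?_⟩
    obtain ⟨k, rfl⟩ : ∃ k : ℕ, m = -k := ⟨m.natAbs, by omega⟩
    have hX : (RatFunc.X : RatFunc ℚ) ^ k ≠ 0 := pow_ne_zero k RatFunc.X_ne_zero
    simp only [Int.natAbs_neg, Int.natAbs_natCast, one_mul, map_sub, map_pow, map_one,
      RatFunc.algebraMap_X, zpow_neg, zpow_natCast]
    field_simp

theorem one_sub_X_zpow_ne_zero {m : ℤ} (hm : m ≠ 0) : (1 - RatFunc.X ^ m : RatFunc ℚ) ≠ 0 := by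
  obtain ⟨u, j, hu, h⟩ := exists_one_sub_X_zpow_eq_div hm
  rw [h]
  exact div_ne_zero (RatFunc.algebraMap_ne_zero (mul_ne_zero hu.ne_zero
    (X_pow_sub_one_ne_zero_of_pos (Int.natAbs_pos.mpr hm))))
    (RatFunc.algebraMap_ne_zero (pow_ne_zero j X_ne_zero))

theorem cycVal_one_sub_X_zpow (hb : 0 < b) {m : ℤ} (hm : m ≠ 0) :
    cycVal b (1 - RatFunc.X ^ m) = if (b : ℤ) ∣ m then 1 else 0 := by
  have hp := prime_cyclotomic_rat hb
  have hk := Int.natAbs_pos.mpr hm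
  have hne := X_pow_sub_one_ne_zero_of_pos hk
  obtain ⟨u, j, hu, h⟩ := exists_one_sub_X_zpow_eq_div hm
  rw [h, cycVal_div hb (mul_ne_zero hu.ne_zero hne) (pow_ne_zero j X_ne_zero),
    polyMult_cyclotomic_X_pow hb, polyMult_mul hp hu.ne_zero hne,
    polyMult_eq_zero hp hu.ne_zero fun hdvd => hp.not_isUnit (isUnit_of_dvd_unit hdvd hu),
    polyMult_cyclotomic_X_pow_sub_one hb hk]
  simp only [Int.natCast_dvd]
  split_ifs <;> simp

theorem qPoch_ne_zero {r s : ℤ} {n : ℕ} (h : ∀ i < n, r + s * (i : ℤ) ≠ 0) : qPoch r s n ≠ 0 :=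
  Finset.prod_ne_zero_iff.mpr fun i hi => one_sub_X_zpow_ne_zero (h i (Finset.mem_range.mp hi))

theorem cycVal_qPoch (hb : 0 < b) {r s : ℤ} {n : ℕ} (h : ∀ i < n, r + s * (i : ℤ) ≠ 0) :
    cycVal b (qPoch r s n) =
      ∑ i ∈ Finset.range n, if (b : ℤ) ∣ r + s * (i : ℤ) then 1 else 0 := by
  rw [qPoch, cycVal_prod hb _ _ fun i hi => one_sub_X_zpow_ne_zero (h i (Finset.mem_range.mp hi))]
  exact Finset.sum_congr rfl fun i hi => cycVal_one_sub_X_zpow hb (h i (Finset.mem_range.mp hi))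

/-- A primitive of the indicator of `b ∣ r + s * m` computes the valuation of the
`q`-Pochhammer symbol. -/
theorem cycVal_qPochZ_eq_of_succ (hb : 0 < b) {r s n : ℤ}
    (hpos : ∀ i : ℤ, 0 ≤ i → i < n → r + s * i ≠ 0)
    (hneg : ∀ i : ℤ, n ≤ i → i < 0 → r + s * i ≠ 0) (F : ℤ → ℤ) (hF0 : F 0 = 0)
    (hF : ∀ m, F (m + 1) = F m + if (b : ℤ) ∣ r + s * m then 1 else 0) :
    cycVal b (qPochZ r s n) = F n := by
  unfold qPochZ
  split_ifs with hn
  · lift n to ℕ using hn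
    rw [Int.toNat_natCast,
      cycVal_qPoch hb fun i hi => hpos i (Int.natCast_nonneg i) (by exact_mod_cast hi)]
    clear hpos hneg
    induction n with
    | zero => simpa using hF0.symm
    | succ n ih => rw [Finset.sum_range_succ, ih, Nat.cast_succ, hF]
  · obtain ⟨k, rfl⟩ : ∃ k : ℕ, n = -k := ⟨n.natAbs, by omega⟩
    have hfac : ∀ i : ℤ, r - s + -s * i = r + s * (-(i + 1)) := fun i => by ring
    have hne : ∀ i < k, r - s + -s * (i : ℤ) ≠ 0 := fun i hi => by
      rw [hfac]
      exact hneg _ (by omega) (by omega)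
    rw [neg_neg, Int.toNat_natCast, cycVal_inv hb (qPoch_ne_zero hne), cycVal_qPoch hb hne]
    clear hne hpos hneg hn
    induction k with
    | zero => simpa using hF0.symm
    | succ k ih =>
      have hstep := hF (-((k : ℤ) + 1))
      rw [show -((k : ℤ) + 1) + 1 = -k by ring, ← hfac] at hstep
      rw [Finset.sum_range_succ, neg_add, ih, hstep, Nat.cast_succ]
      ring

end CycVal

/-- The defining property of the Dwork map, for a fraction whose denominator is coprime to `b`. -/
theorem exists_dwork_div {b : ℕ} (hb : 0 < b) {r s : ℤ} (hs : s ≠ 0) (hsb : IsCoprime s (b : ℤ)) :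
    ∃ k : ℤ, 0 ≤ k ∧ k < b ∧ (b : ℚ) * dwork b ((r : ℚ) / s) - (r : ℚ) / s = k ∧
      (b : ℤ) ∣ r + s * k := by
  have hsQ : (s : ℚ) ≠ 0 := by exact_mod_cast hs
  have hbZ : (0 : ℤ) < b := by exact_mod_cast hb
  have hex : ∃ θ : ℚ, Nat.Coprime θ.den b ∧
      ∃ k : ℤ, 0 ≤ k ∧ k < (b : ℤ) ∧ (b : ℚ) * θ - (r : ℚ) / s = (k : ℚ) := by
    obtain ⟨u, w, huw⟩ := hsb
    obtain ⟨t, ht⟩ : (b : ℤ) ∣ r + s * ((-r * u) % b) := by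
      refine ⟨r * w - s * ((-r * u) / b), ?_⟩
      have hdiv := Int.emod_add_mul_ediv (-r * u) b
      linear_combination s * hdiv - r * huw
    refine ⟨(t : ℚ) / s, ?_, (-r * u) % b, Int.emod_nonneg _ hbZ.ne',
      Int.emod_lt_of_pos _ hbZ, ?_⟩
    · have hcop : IsCoprime (((t : ℚ) / s).den : ℤ) (b : ℤ) :=
        IsCoprime.of_isCoprime_of_dvd_left (y := s) ⟨u, w, huw⟩
          (Rat.divInt_eq_div t s ▸ Rat.den_dvd t s)
      exact Nat.isCoprime_iff_coprime.mp hcop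
    · have htQ : (r : ℚ) + s * ((-r * u % b : ℤ) : ℚ) = b * t := by exact_mod_cast ht
      field_simp
      linear_combination -htQ
  have hdwork : dwork b ((r : ℚ) / s) = hex.choose := dif_pos hex
  obtain ⟨hden, k, hk0, hkb, hk⟩ := hex.choose_spec
  rw [← hdwork] at hden hk
  refine ⟨k, hk0, hkb, hk, ?_⟩
  set θ := dwork b ((r : ℚ) / s)
  have hmul : (θ.den : ℤ) * (r + s * k) = b * (θ.num * s) := by
    have hθ : θ * θ.den = θ.num := Rat.mul_den_eq_num θ
    have hkQ : (b : ℚ) * θ * s = r + s * k := by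
      rw [← hk]
      field_simp
      ring
    have : (θ.den : ℚ) * (r + s * k) = b * (θ.num * s) := by
      linear_combination -(θ.den : ℚ) * hkQ + b * s * hθ
    exact_mod_cast this
  exact (Nat.isCoprime_iff_coprime.mpr hden).symm.dvd_of_dvd_mul_left ⟨_, hmul⟩

theorem Int.floor_add_div_natCast (b : ℕ) (m : ℤ) {ε : ℝ} (h0 : 0 ≤ ε)
    (h1 : ε < 1) : ⌊((m : ℝ) + ε) / (b : ℝ)⌋ = m / (b : ℤ) := by
  have hfloor : ⌊(m : ℝ) + ε⌋ = m := by
    rw [Int.floor_intCast_add, Int.floor_eq_zero_iff.mpr ⟨h0, h1⟩, add_zero]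
  rw [Int.floor_div_natCast, hfloor]

theorem Int.add_one_ediv_eq {b : ℤ} (hb : 0 < b) (m : ℤ) :
    (m + 1) / b = m / b + if b ∣ m + 1 then 1 else 0 := by
  have h1 := Int.emod_add_mul_ediv m b
  have h2 := Int.emod_nonneg m hb.ne'
  have h3 := Int.emod_lt_of_pos m hb
  rcases eq_or_lt_of_le (Int.add_one_le_of_lt h3) with h | h
  · have hm : m + 1 = b * (m / b + 1) := by linarith
    rw [if_pos ⟨_, hm⟩, hm, Int.mul_ediv_cancel_left _ hb.ne']
  · have hm : m + 1 = (m % b + 1) + b * (m / b) := by linarith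
    have hnd : ¬ b ∣ m + 1 := by
      rw [hm, Int.dvd_add_left (dvd_mul_right b _)]
      intro hdvd
      have := Int.le_of_dvd (by omega) hdvd
      omega
    rw [if_neg hnd, add_zero, hm, Int.add_mul_ediv_left _ _ hb.ne',
      Int.ediv_eq_zero_of_lt (by omega) h, zero_add]

theorem div_eq_neg_of_add_mul_eq_zero {r s i : ℤ} (hs : s ≠ 0) (h : r + s * i = 0) :
    (r : ℚ) / s = ((-i : ℤ) : ℚ) := by
  have hsQ : (s : ℚ) ≠ 0 := by exact_mod_cast hs
  rw [div_eq_iff hsQ]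
  exact_mod_cast (by linarith : r = -i * s)

/-- Explicit form of `qdelta` after dividing `r`, `s`, `b` by their greatest common divisor. -/
theorem exists_qdelta_eq_ediv {c b : ℕ} (hc : 0 < c) (hb : 0 < b) {r s : ℤ} (hs : s ≠ 0)
    (hgcd : Nat.gcd (Int.gcd (c * r) (c * s)) (c * b) = c) (hsb : Int.gcd s b = 1) :
    ∃ k : ℤ, 0 ≤ k ∧ k < b ∧ (b : ℤ) ∣ r + s * k ∧ ∀ n : ℤ,
      qdelta (c * b) (c * r) (c * s) ((n : ℝ) / ((c * b : ℕ) : ℝ)) = (n - k - 1) / (b : ℤ) + 1 := by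
  obtain ⟨k, hk0, hkb, hk, hdvd⟩ :=
    exists_dwork_div (r := r) hb hs (Int.isCoprime_iff_gcd_eq_one.mpr hsb)
  refine ⟨k, hk0, hkb, hdvd, fun n => ?_⟩
  have hcZ : (c : ℤ) ≠ 0 := by exact_mod_cast hc.ne'
  have hcR : (c : ℝ) ≠ 0 := by exact_mod_cast hc.ne'
  have hbR : (b : ℝ) ≠ 0 := by exact_mod_cast hb.ne'
  have hratio : ((c * r : ℤ) : ℚ) / ((c * s : ℤ) : ℚ) = (r : ℚ) / s := by
    push_cast
    exact mul_div_mul_left _ _ (by exact_mod_cast hc.ne')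
  unfold qdelta
  rw [hgcd, Int.mul_ediv_cancel_left s hcZ, Nat.mul_div_cancel_left b hc, if_pos hsb, hratio]
  set α := (r : ℚ) / s
  have hkR : (b : ℝ) * (dwork b α : ℝ) - (α : ℝ) = k := by exact_mod_cast hk
  have hfl : ((Int.fract (1 - α) : ℚ) : ℝ) = 1 - (α : ℝ) - (⌊1 - α⌋ : ℝ) := by
    rw [Int.fract]
    push_cast
    rfl
  have h0 : (0 : ℝ) ≤ (Int.fract (1 - α) : ℚ) := by exact_mod_cast Int.fract_nonneg (1 - α)
  have h1 : ((Int.fract (1 - α) : ℚ) : ℝ) < 1 := by exact_mod_cast Int.fract_lt_one (1 - α)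
  rw [← Int.floor_add_div_natCast b (n - k - 1) h0 h1, hfl]
  congr 2
  push_cast
  field_simp
  linear_combination -hkR

/-- Theorem 1.3: the cyclotomic valuation of a q-Pochhammer symbol equals
`δ_b(r, s, n/b)`, i.e. `⌊c·n/b − D_{b'}(α) − ⌊1−α⌋/b'⌋ + 1` if `gcd(s', b') = 1` and `0`
otherwise. -/
theorem cycVal_qPochZ (r s : ℤ) (hs : s ≠ 0) (b : ℕ) (hb : 0 < b) (n : ℤ)
    (hwf : n < 0 → (¬ IsPosInt ((r : ℚ) / (s : ℚ)) ∨ -((r : ℚ) / (s : ℚ)) < (n : ℚ)))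
    (hnz : 0 ≤ n → (¬ IsNonPosInt ((r : ℚ) / (s : ℚ)) ∨ (n : ℚ) ≤ -((r : ℚ) / (s : ℚ)))) :
    cycVal b (qPochZ r s n) = qdelta b r s ((n : ℝ) / (b : ℝ)) := by
  have hpos : ∀ i : ℤ, 0 ≤ i → i < n → r + s * i ≠ 0 := fun i hi hin h0 => by
    have hα := div_eq_neg_of_add_mul_eq_zero hs h0
    rcases hnz (by omega) with h | h
    · exact h ⟨-i, by omega, hα⟩
    · rw [hα] at h
      have : n ≤ -(-i) := by exact_mod_cast h
      omega
  have hneg : ∀ i : ℤ, n ≤ i → i < 0 → r + s * i ≠ 0 := fun i hin hi h0 => by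
    have hα := div_eq_neg_of_add_mul_eq_zero hs h0
    rcases hwf (by omega) with h | h
    · exact h ⟨-i, by omega, hα⟩
    · rw [hα] at h
      have : -(-i) < n := by exact_mod_cast h
      omega
  obtain ⟨c, hcdef⟩ : ∃ c, c = Nat.gcd (Int.gcd r s) b := ⟨_, rfl⟩
  have hc : 0 < c := hcdef ▸ Nat.gcd_pos_of_pos_right _ hb
  have hcZ : (c : ℤ) ≠ 0 := by exact_mod_cast hc.ne'
  have hcrs : (c : ℤ) ∣ (Int.gcd r s : ℤ) := by
    rw [hcdef]
    exact_mod_cast Nat.gcd_dvd_left _ _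
  obtain ⟨r, rfl⟩ := hcrs.trans (Int.gcd_dvd_left r s)
  obtain ⟨s, rfl⟩ := hcrs.trans (Int.gcd_dvd_right _ s)
  obtain ⟨b, rfl⟩ : c ∣ b := hcdef ▸ Nat.gcd_dvd_right _ _
  have hb' : 0 < b := Nat.pos_of_mul_pos_left hb
  have hs' : s ≠ 0 := right_ne_zero_of_mul hs
  have hdvd_iff : ∀ m : ℤ, ((c * b : ℕ) : ℤ) ∣ c * r + c * s * m ↔ (b : ℤ) ∣ r + s * m := by
    intro m
    rw [show (c : ℤ) * r + c * s * m = c * (r + s * m) by ring, Nat.cast_mul]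
    exact mul_dvd_mul_iff_left hcZ
  by_cases hsb : Int.gcd s b = 1
  · obtain ⟨k, hk0, hkb, hdvd, hq⟩ := exists_qdelta_eq_ediv hc hb' hs' hcdef.symm hsb
    have hbZ : (0 : ℤ) < b := by exact_mod_cast hb'
    rw [hq]
    refine cycVal_qPochZ_eq_of_succ hb hpos hneg (fun m => (m - k - 1) / (b : ℤ) + 1) ?_ ?_
    · have : (0 - k - 1) / (b : ℤ) = -1 := by
        rw [Int.ediv_eq_iff_of_pos hbZ]
        constructor <;> linarith
      simp only [this]
      norm_num
    · intro m
      have hiff : ((c * b : ℕ) : ℤ) ∣ c * r + c * s * m ↔ (b : ℤ) ∣ (m - k - 1) + 1 := by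
        rw [hdvd_iff, show r + s * m = r + s * k + s * (m - k) by ring, dvd_add_right hdvd,
          show m - k - 1 + 1 = m - k by ring]
        exact ⟨(Int.isCoprime_iff_gcd_eq_one.mpr hsb).symm.dvd_of_dvd_mul_left,
          fun h => h.mul_left s⟩
      simp only [hiff]
      rw [show m + 1 - k - 1 = m - k - 1 + 1 by ring, Int.add_one_ediv_eq hbZ]
      ring
  · have hq : ∀ x, qdelta (c * b) (c * r) (c * s) x = 0 := fun x => by
      unfold qdelta
      rw [← hcdef, Int.mul_ediv_cancel_left s hcZ, Nat.mul_div_cancel_left b hc, if_neg hsb]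
    rw [hq]
    refine cycVal_qPochZ_eq_of_succ hb hpos hneg (fun _ => 0) rfl fun m => ?_
    rw [if_neg, add_zero]
    rw [hdvd_iff]
    intro hdvd
    have hgs : (Int.gcd s b : ℤ) ∣ s := Int.gcd_dvd_left _ _
    have hgb : (Int.gcd s b : ℤ) ∣ b := Int.gcd_dvd_right _ _
    have hgr : (Int.gcd s b : ℤ) ∣ r := (dvd_add_left (hgs.mul_right m)).mp (hgb.trans hdvd)
    have hcg : c * Int.gcd s b ∣ c := by
      conv_rhs => rw [hcdef]
      refine Nat.dvd_gcd (Int.dvd_gcd ?_ ?_) ?_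
      · exact_mod_cast mul_dvd_mul_left (c : ℤ) hgr
      · exact_mod_cast mul_dvd_mul_left (c : ℤ) hgs
      · exact mul_dvd_mul_left c (by exact_mod_cast hgb)
    exact hsb (Nat.dvd_one.mp ((Nat.mul_dvd_mul_iff_left hc).mp (by simpa using hcg)))
end

section
/- Let 𝐫 = ((r_1,s_1),…,(r_v,s_v)) and 𝐭 = ((t_1,u_1),…,(t_w,u_w)) be vectors of pairs of integers with all s_i, u_j ≠ 0, such that (Q_{𝐫,𝐭}(q; n))_{n≥0} is a well-defined sequence. Then the following are equivalent: (i) there exists C(q) ∈ ℤ[q] ∖ {0} such that C(q)^n · Q_{𝐫,𝐭}(q; n) ∈ ℤ[q^{−1}, q] for every n ≥ 0; (ii) for all but finitely many positive integers b, the function Δ_b^{𝐫,𝐭} is non-negative on ℝ_{≥0}. -/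
open Polynomial
open scoped Classical

noncomputable section

/-- The number of `i < n` with `b ∣ r + s * i`. -/
def dvdCount (b : ℕ) (r s : ℤ) (n : ℕ) : ℕ :=
  ((Finset.range n).filter fun i : ℕ => (b : ℤ) ∣ r + s * (i : ℤ)).card

theorem dvdCount_succ (b : ℕ) (r s : ℤ) (n : ℕ) :
    dvdCount b r s (n + 1) = dvdCount b r s n + if (b : ℤ) ∣ r + s * (n : ℤ) then 1 else 0 := by
  unfold dvdCount
  rw [Finset.range_add_one, Finset.filter_insert]
  split_ifs with h <;> simp

theorem dvdCount_le (b : ℕ) (r s : ℤ) (n : ℕ) : dvdCount b r s n ≤ n :=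
  (Finset.card_filter_le _ _).trans (by simp)

theorem Int.ediv_eq_sub_one_ediv_add (m B : ℤ) (hB : 0 < B) :
    m / B = (m - 1) / B + if B ∣ m then 1 else 0 := by
  split_ifs with h
  · obtain ⟨t, rfl⟩ := h
    rw [Int.mul_ediv_cancel_left _ hB.ne']
    have : (B * t - 1) / B = t - 1 := by
      rw [Int.ediv_eq_iff_of_pos hB]
      constructor <;> nlinarith
    omega
  · have h1 := Int.emod_add_mul_ediv m B
    have h2 := Int.emod_nonneg m hB.ne'
    have h3 := Int.emod_lt_of_pos m hB
    have h4 : m % B ≠ 0 := fun h0 => h (Int.dvd_of_emod_eq_zero h0)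
    have : (m - 1) / B = m / B := by
      rw [Int.ediv_eq_iff_of_pos hB]
      have : 0 < m % B := by omega
      constructor <;> nlinarith
    omega

theorem card_filter_range_dvd_sub (B k : ℤ) (hk : 0 ≤ k) (hkB : k < B) (n : ℕ) :
    (((Finset.range n).filter fun i : ℕ => B ∣ (i : ℤ) - k).card : ℤ) = ((n : ℤ) - 1 - k) / B + 1 := by
  have hB : 0 < B := hk.trans_lt hkB
  induction n with
  | zero =>
    have : ((0 : ℤ) - 1 - k) / B = -1 := by
      rw [Int.ediv_eq_iff_of_pos hB]
      constructor <;> nlinarith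
    rw [Nat.cast_zero, this]
    simp
  | succ n ih =>
    rw [Finset.range_add_one, Finset.filter_insert]
    have key := Int.ediv_eq_sub_one_ediv_add ((n : ℤ) - k) B hB
    have e1 : (((n + 1 : ℕ) : ℤ) - 1 - k) = (n : ℤ) - k := by push_cast; ring
    have e2 : (n : ℤ) - k - 1 = (n : ℤ) - 1 - k := by ring
    rw [e1, key, e2]
    split_ifs with h
    · rw [Finset.card_insert_of_notMem (by simp)]
      push_cast
      omega
    · omega

theorem dwork_spec (B : ℕ) (hB : 0 < B) (r s : ℤ) (hs : s ≠ 0) (hco : Int.gcd s B = 1) :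
    ∃ k : ℤ, 0 ≤ k ∧ k < (B : ℤ) ∧ (B : ℤ) ∣ r + s * k ∧
      (B : ℚ) * dwork B ((r : ℚ) / s) = (r : ℚ) / s + k := by
  have hsQ : (s : ℚ) ≠ 0 := by exact_mod_cast hs
  have hBQ : (B : ℚ) ≠ 0 := by exact_mod_cast hB.ne'
  have hex : ∃ θ : ℚ, Nat.Coprime θ.den B ∧
      ∃ k : ℤ, 0 ≤ k ∧ k < (B : ℤ) ∧ (B : ℚ) * θ - (r : ℚ) / s = (k : ℚ) := by
    have hbez := Int.gcd_eq_gcd_ab s B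
    rw [hco] at hbez
    set u := Int.gcdA s B
    set w := Int.gcdB s B
    have hB' : (0 : ℤ) < B := by exact_mod_cast hB
    have hdvd : (B : ℤ) ∣ r + s * ((-r * u) % B) := by
      refine ⟨r * w - s * ((-r * u) / B), ?_⟩
      have h1 := Int.emod_add_mul_ediv (-r * u) B
      have h2 : (-r * u) % B = -r * u - B * ((-r * u) / B) := by linarith
      rw [h2]
      push_cast at hbez
      linear_combination r * hbez
    obtain ⟨m, hm⟩ := hdvd
    refine ⟨(m : ℚ) / s, ?_, (-r * u) % B, Int.emod_nonneg _ hB'.ne', Int.emod_lt_of_pos _ hB', ?_⟩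
    · have hd : (((m : ℚ) / s).den : ℤ) ∣ s := by
        rw [← Rat.divInt_eq_div]
        exact Rat.den_dvd m s
      have : ((m : ℚ) / s).den ∣ s.natAbs := Int.natCast_dvd.mp hd
      refine Nat.Coprime.coprime_dvd_left this ?_
      simpa [Int.gcd] using hco
    · have hmQ : (r : ℚ) + s * ((-r * u % B : ℤ) : ℚ) = B * m := by exact_mod_cast hm
      field_simp
      linear_combination -hmQ
  obtain ⟨hc, k, hk0, hkB, hk⟩ := hex.choose_spec
  have hd : dwork B ((r : ℚ) / s) = hex.choose := by rw [dwork, dif_pos hex]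
  rw [← hd] at hc hk
  set θ := dwork B ((r : ℚ) / s)
  refine ⟨k, hk0, hkB, ?_, by linarith⟩
  have hz : (s * B * θ.num : ℤ) = (r + s * k) * θ.den := by
    have hθ : θ * θ.den = θ.num := Rat.mul_den_eq_num θ
    have h1 : (s : ℚ) * B * θ = r + s * k := by
      rw [← hk]
      field_simp
      ring
    have : ((s * B * θ.num : ℤ) : ℚ) = ((r + s * k) * θ.den : ℤ) := by
      push_cast
      rw [← hθ, ← h1]
      ring
    exact_mod_cast this
  have hdv : (B : ℤ) ∣ (r + s * k) * θ.den := ⟨s * θ.num, by rw [← hz]; ring⟩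
  refine IsCoprime.dvd_of_dvd_mul_right ?_ hdv
  exact Nat.isCoprime_iff_coprime.mpr hc.symm

/-- The representative in `(0, 1]` of `α` modulo `ℤ`. -/
def unitRep (α : ℚ) : ℚ := α + ⌊1 - α⌋

theorem unitRep_pos (α : ℚ) : 0 < unitRep α := by
  have := Int.lt_floor_add_one (1 - α)
  unfold unitRep
  linarith

theorem unitRep_le_one (α : ℚ) : unitRep α ≤ 1 := by
  have := Int.floor_le (1 - α)
  unfold unitRep
  linarith

theorem qdelta_eq_dvdCount (b : ℕ) (hb : 0 < b) (r s : ℤ) (hs : s ≠ 0) (x : ℝ) (n : ℕ)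
    (hn : (n : ℝ) ≤ b * x) (hn' : b * x < n + 1) :
    qdelta b r s x =
      dvdCount b r s (if ((unitRep ((r : ℚ) / s) : ℚ) : ℝ) ≤ b * x - n then n + 1 else n) := by
  set c := Nat.gcd (Int.gcd r s) b with hc
  have hc0 : 0 < c := Nat.gcd_pos_of_pos_right _ hb
  have hcrs : c ∣ Int.gcd r s := Nat.gcd_dvd_left _ _
  obtain ⟨B, hB⟩ : c ∣ b := Nat.gcd_dvd_right _ _
  obtain ⟨r', hr'⟩ : (c : ℤ) ∣ r := (Int.natCast_dvd_natCast.mpr hcrs).trans (Int.gcd_dvd_left ..)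
  obtain ⟨s', hs'⟩ : (c : ℤ) ∣ s := (Int.natCast_dvd_natCast.mpr hcrs).trans (Int.gcd_dvd_right ..)
  have hcZ : (c : ℤ) ≠ 0 := by exact_mod_cast hc0.ne'
  have hB0 : 0 < B := by
    rcases Nat.eq_zero_or_pos B with h | h
    · simp [h] at hB; omega
    · exact h
  have hs0 : s' ≠ 0 := by rintro rfl; simp at hs'; exact hs hs'
  have ediv1 : b / c = B := by rw [hB]; exact Nat.mul_div_cancel_left _ hc0
  have ediv2 : s / (c : ℤ) = s' := by rw [hs']; exact Int.mul_ediv_cancel_left _ hcZ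
  have hα : (r : ℚ) / s = (r' : ℚ) / s' := by
    rw [hr', hs']
    push_cast
    exact mul_div_mul_left _ _ (by exact_mod_cast hcZ)
  have hiff : ∀ i : ℕ, (b : ℤ) ∣ r + s * (i : ℤ) ↔ (B : ℤ) ∣ r' + s' * (i : ℤ) := by
    intro i
    rw [hr', hs', hB]
    push_cast
    rw [mul_assoc, ← mul_add]
    exact mul_dvd_mul_iff_left hcZ
  unfold qdelta
  rw [← hc, ediv1, ediv2]
  by_cases hco : Int.gcd s' B = 1
  swap
  · rw [if_neg hco]
    symm
    rw [Nat.cast_eq_zero, dvdCount, Finset.card_eq_zero, Finset.filter_eq_empty_iff]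
    intro i _ hi
    apply hco
    have hg : ((Int.gcd s' B : ℕ) : ℤ) ∣ r' := by
      have h1 := ((Int.gcd_dvd_right s' (B : ℤ)).trans ((hiff i).mp hi))
      have h2 : ((Int.gcd s' B : ℕ) : ℤ) ∣ s' * (i : ℤ) := (Int.gcd_dvd_left s' (B : ℤ)).mul_right _
      exact (dvd_add_left h2).mp h1
    have hdv : c * Int.gcd s' B ∣ c := by
      conv_rhs => rw [hc]
      refine Nat.dvd_gcd (Int.dvd_gcd ?_ ?_) ?_
      · rw [hr']; push_cast; exact mul_dvd_mul_left _ hg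
      · rw [hs']; push_cast; exact mul_dvd_mul_left _ (Int.gcd_dvd_left ..)
      · rw [hB]
        exact mul_dvd_mul_left _ (Int.natCast_dvd_natCast.mp (Int.gcd_dvd_right ..))
    have := Nat.le_of_dvd hc0 hdv
    have h3 : Int.gcd s' B ≠ 0 := by
      intro h0
      exact hs0 (Int.gcd_eq_zero_iff.mp h0).1
    rcases Nat.lt_or_ge 1 (Int.gcd s' B) with h | h
    · nlinarith
    · omega
  rw [if_pos hco]
  obtain ⟨k, hk0, hkB, hkd, hkD⟩ := dwork_spec B hB0 r' s' hs0 hco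
  have hcop : IsCoprime (B : ℤ) s' := (Int.isCoprime_iff_gcd_eq_one.mpr hco).symm
  have hcnt : ∀ N : ℕ, (dvdCount b r s N : ℤ) = ((N : ℤ) - 1 - k) / B + 1 := by
    intro N
    rw [← card_filter_range_dvd_sub B k hk0 hkB N, dvdCount]
    congr 2
    ext i
    rw [Finset.mem_filter, Finset.mem_filter, hiff i]
    refine and_congr_right fun _ => ?_
    have : r' + s' * (i : ℤ) = s' * (i - k) + (r' + s' * k) := by ring
    rw [this, dvd_add_left hkd]
    exact ⟨hcop.dvd_of_dvd_mul_left, fun h => h.mul_left _⟩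
  rw [hcnt, add_left_inj]
  have hBR : (B : ℝ) ≠ 0 := by exact_mod_cast hB0.ne'
  have hbR : (b : ℝ) = c * B := by exact_mod_cast hB
  have hD : (B : ℝ) * ((dwork B ((r' : ℚ) / s') : ℚ) : ℝ) = (((r' : ℚ) / s' : ℚ) : ℝ) + k := by
    exact_mod_cast hkD
  have hu0 : (0 : ℝ) < (unitRep ((r : ℚ) / s) : ℚ) := by exact_mod_cast unitRep_pos _
  have hu1 : ((unitRep ((r : ℚ) / s) : ℚ) : ℝ) ≤ 1 := by exact_mod_cast unitRep_le_one _
  have harg : (c : ℝ) * x - ((dwork B ((r : ℚ) / s) : ℚ) : ℝ) -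
      ((⌊1 - (r : ℚ) / s⌋ : ℤ) : ℝ) / B =
      (b * x - k - ((unitRep ((r : ℚ) / s) : ℚ) : ℝ)) / B := by
    rw [hα, unitRep, eq_div_iff hBR]
    simp only [Rat.cast_add, Rat.cast_intCast]
    rw [sub_mul, sub_mul, div_mul_cancel₀ _ hBR, hbR]
    linear_combination -hD
  rw [harg, Int.floor_div_natCast]
  congr 1
  rw [Int.floor_eq_iff]
  split_ifs with hle
  all_goals
    push_cast
    constructor <;> linarith

theorem qdelta_natCast_div (b : ℕ) (hb : 0 < b) (r s : ℤ) (hs : s ≠ 0) (n : ℕ) :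
    qdelta b r s ((n : ℝ) / b) = dvdCount b r s n := by
  have hbR : (b : ℝ) ≠ 0 := by exact_mod_cast hb.ne'
  have e : (b : ℝ) * ((n : ℝ) / b) = n := mul_div_cancel₀ _ hbR
  rw [qdelta_eq_dvdCount b hb r s hs _ n (by rw [e]) (by rw [e]; linarith), if_neg]
  rw [e, sub_self, not_le]
  exact_mod_cast unitRep_pos _

theorem qDeltaFn_natCast_div {v w : ℕ} (b : ℕ) (hb : 0 < b) (rr : Fin v → ℤ × ℤ)
    (tt : Fin w → ℤ × ℤ) (hs : ∀ i, (rr i).2 ≠ 0) (hu : ∀ j, (tt j).2 ≠ 0) (n : ℕ) :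
    qDeltaFn b rr tt ((n : ℝ) / b) =
      (∑ i, (dvdCount b (rr i).1 (rr i).2 n : ℤ)) - ∑ j, (dvdCount b (tt j).1 (tt j).2 n : ℤ) := by
  unfold qDeltaFn
  congr 1
  · exact Finset.sum_congr rfl fun i _ => qdelta_natCast_div b hb _ _ (hs i) n
  · exact Finset.sum_congr rfl fun i _ => qdelta_natCast_div b hb _ _ (hu i) n

/-- For large `b`, every value of `Δ_b` on `ℝ_{≥0}` is attained at some `n / b`, `n ∈ ℕ`. -/
theorem exists_qDeltaFn_eq_natCast_div {v w : ℕ} (rr : Fin v → ℤ × ℤ) (tt : Fin w → ℤ × ℤ)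
    (hs : ∀ i, (rr i).2 ≠ 0) (hu : ∀ j, (tt j).2 ≠ 0) :
    ∃ N : ℕ, ∀ b : ℕ, N ≤ b → ∀ x : ℝ, 0 ≤ x →
      ∃ n : ℕ, qDeltaFn b rr tt x = qDeltaFn b rr tt ((n : ℝ) / b) := by
  set p : Fin v ⊕ Fin w → ℤ × ℤ := Sum.elim rr tt with hp
  have hp2 : ∀ i, (p i).2 ≠ 0 := by rintro (i | j) <;> simp [hp, hs, hu]
  let bd : ℕ := ∑ i, ∑ j, ((p j).2 * (p i).1 - (p i).2 * (p j).1).natAbs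
  refine ⟨bd + 1, fun b hb x hx => ?_⟩
  have hb0 : 0 < b := by omega
  have hsame : ∀ (n : ℕ) (i j), (b : ℤ) ∣ (p i).1 + (p i).2 * n → (b : ℤ) ∣ (p j).1 + (p j).2 * n →
      ((p i).1 : ℚ) / (p i).2 = ((p j).1 : ℚ) / (p j).2 := by
    intro n i j hi hj
    have hd : (b : ℤ) ∣ (p j).2 * (p i).1 - (p i).2 * (p j).1 := by
      have := dvd_sub (hi.mul_left (p j).2) (hj.mul_left (p i).2)
      have e : (p j).2 * (p i).1 - (p i).2 * (p j).1 = (p j).2 * ((p i).1 + (p i).2 * n) -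
          (p i).2 * ((p j).1 + (p j).2 * n) := by ring
      rwa [e]
    have hle : ((p j).2 * (p i).1 - (p i).2 * (p j).1).natAbs ≤ bd :=
      (Finset.single_le_sum (f := fun j => ((p j).2 * (p i).1 - (p i).2 * (p j).1).natAbs)
        (fun _ _ => Nat.zero_le _) (Finset.mem_univ j)).trans
      (Finset.single_le_sum
        (f := fun i => ∑ j, ((p j).2 * (p i).1 - (p i).2 * (p j).1).natAbs)
        (fun _ _ => Nat.zero_le _) (Finset.mem_univ i))
    have h0 := Int.eq_zero_of_dvd_of_natAbs_lt_natAbs hd (by simp; omega)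
    have h1 : (p i).1 * (p j).2 = (p j).1 * (p i).2 := by linarith
    rw [div_eq_div_iff (by exact_mod_cast hp2 i) (by exact_mod_cast hp2 j)]
    exact_mod_cast h1
  have hbx : (0 : ℝ) ≤ b * x := by positivity
  obtain ⟨n, hn, hn'⟩ : ∃ n : ℕ, (n : ℝ) ≤ b * x ∧ b * x < n + 1 :=
    ⟨⌊(b : ℝ) * x⌋₊, Nat.floor_le hbx, Nat.lt_floor_add_one _⟩
  obtain ⟨m, hm⟩ : ∃ m : ℕ, ∀ i, qdelta b (p i).1 (p i).2 x = dvdCount b (p i).1 (p i).2 m := by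
    by_cases h : ∃ i, (b : ℤ) ∣ (p i).1 + (p i).2 * n
    · obtain ⟨i, hi⟩ := h
      refine ⟨if ((unitRep (((p i).1 : ℚ) / (p i).2) : ℚ) : ℝ) ≤ b * x - n then n + 1 else n, ?_⟩
      intro j
      rw [qdelta_eq_dvdCount b hb0 _ _ (hp2 j) x n hn hn']
      by_cases hj : (b : ℤ) ∣ (p j).1 + (p j).2 * n
      · rw [hsame n i j hi hj]
      · have : dvdCount b (p j).1 (p j).2 (n + 1) = dvdCount b (p j).1 (p j).2 n := by
          rw [dvdCount_succ, if_neg hj, add_zero]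
        split_ifs <;> simp [this]
    · push Not at h
      refine ⟨n, fun j => ?_⟩
      rw [qdelta_eq_dvdCount b hb0 _ _ (hp2 j) x n hn hn']
      have : dvdCount b (p j).1 (p j).2 (n + 1) = dvdCount b (p j).1 (p j).2 n := by
        rw [dvdCount_succ, if_neg (h j), add_zero]
      split_ifs <;> simp [this]
  refine ⟨m, ?_⟩
  rw [qDeltaFn_natCast_div b hb0 rr tt hs hu]
  unfold qDeltaFn
  congr 1
  · exact Finset.sum_congr rfl fun i _ => hm (Sum.inl i)
  · exact Finset.sum_congr rfl fun j _ => hm (Sum.inr j)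

/-- The integer polynomial `∏_{i < n} (X^|r + s i| - 1)`, equal to `(q^r; q^s)_n` up to a unit of
`ℤ[q⁻¹, q]`. -/
def pochPoly (r s : ℤ) (n : ℕ) : ℤ[X] :=
  ∏ i ∈ Finset.range n, (X ^ (r + s * (i : ℤ)).natAbs - 1)

/-- Equality in `ℚ(q)` up to a unit of `ℤ[q⁻¹, q]`. -/
def LaurentAssoc (f g : RatFunc ℚ) : Prop :=
  ∃ (k : ℤ) (u : ℤˣ), f = ((u : ℤ) : RatFunc ℚ) * RatFunc.X ^ k * g

theorem LaurentAssoc.refl (f : RatFunc ℚ) : LaurentAssoc f f := ⟨0, 1, by simp⟩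

theorem LaurentAssoc.mul {f g f' g' : RatFunc ℚ} (h : LaurentAssoc f g)
    (h' : LaurentAssoc f' g') : LaurentAssoc (f * f') (g * g') := by
  obtain ⟨k, u, rfl⟩ := h
  obtain ⟨k', u', rfl⟩ := h'
  refine ⟨k + k', u * u', ?_⟩
  rw [zpow_add₀ RatFunc.X_ne_zero]
  push_cast
  ring

theorem LaurentAssoc.inv {f g : RatFunc ℚ} (h : LaurentAssoc f g) : LaurentAssoc f⁻¹ g⁻¹ := by
  obtain ⟨k, u, rfl⟩ := h
  refine ⟨-k, u, ?_⟩
  rw [mul_inv, mul_inv, zpow_neg]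
  rcases Int.units_eq_one_or u with rfl | rfl <;> simp

theorem LaurentAssoc.prod {ι : Type*} (S : Finset ι) (f g : ι → RatFunc ℚ)
    (h : ∀ i ∈ S, LaurentAssoc (f i) (g i)) : LaurentAssoc (∏ i ∈ S, f i) (∏ i ∈ S, g i) := by
  induction S using Finset.induction_on with
  | empty => simpa using LaurentAssoc.refl 1
  | insert a S ha ih =>
    rw [Finset.prod_insert ha, Finset.prod_insert ha]
    exact (h a (by simp)).mul (ih fun i hi => h i (by simp [hi]))

/-- `polyZ` as a ring homomorphism. -/
def polyZHom : ℤ[X] →+* RatFunc ℚ :=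
  (algebraMap ℚ[X] (RatFunc ℚ)).comp (Polynomial.mapRingHom (Int.castRingHom ℚ))

theorem polyZHom_apply (g : ℤ[X]) : polyZHom g = polyZ g := rfl

theorem polyZHom_injective : Function.Injective polyZHom :=
  (RatFunc.algebraMap_injective ℚ).comp (Polynomial.map_injective _ Int.cast_injective)

theorem polyZHom_X : polyZHom X = RatFunc.X := by simp [polyZHom]

theorem laurentAssoc_qPoch (r s : ℤ) (n : ℕ) :
    LaurentAssoc (qPoch r s n) (polyZHom (pochPoly r s n)) := by
  unfold qPoch pochPoly
  rw [map_prod]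
  refine LaurentAssoc.prod _ _ _ fun i _ => ?_
  rw [map_sub, map_pow, map_one, polyZHom_X, ← zpow_natCast]
  rcases Int.natAbs_eq (r + s * (i : ℤ)) with h | h
  · refine ⟨0, -1, ?_⟩
    rw [← h]
    simp
  · refine ⟨r + s * (i : ℤ), 1, ?_⟩
    have : ((r + s * (i : ℤ)).natAbs : ℤ) = -(r + s * (i : ℤ)) := by omega
    rw [this, zpow_neg]
    have hX : (RatFunc.X : RatFunc ℚ) ^ (r + s * (i : ℤ)) ≠ 0 := zpow_ne_zero _ RatFunc.X_ne_zero
    simp [mul_sub, mul_inv_cancel₀ hX]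

theorem isIntLaurent_iff_dvd {f : RatFunc ℚ} {A B : ℤ[X]} (hB : B ≠ 0)
    (h : LaurentAssoc f (polyZHom A / polyZHom B)) :
    IsIntLaurent f ↔ ∃ m : ℕ, B ∣ X ^ m * A := by
  have hB' : polyZHom B ≠ 0 := (map_ne_zero_iff _ polyZHom_injective).mpr hB
  have hX : (RatFunc.X : RatFunc ℚ) ≠ 0 := RatFunc.X_ne_zero
  obtain ⟨k, u, rfl⟩ := h
  have huu : ((u : ℤ) : RatFunc ℚ) * ((u : ℤ) : RatFunc ℚ) = 1 := by
    rcases Int.units_eq_one_or u with rfl | rfl <;> simp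
  constructor
  · rintro ⟨m, g, hg⟩
    rw [← polyZHom_apply] at hg
    refine ⟨m + k.toNat, (u : ℤ[X]) * X ^ (-k).toNat * g, polyZHom_injective ?_⟩
    simp only [map_mul, map_pow, polyZHom_X, map_intCast]
    have hk : (RatFunc.X : RatFunc ℚ) ^ k.toNat = RatFunc.X ^ k * RatFunc.X ^ (-k).toNat := by
      rw [← zpow_natCast, ← zpow_natCast, ← zpow_add₀ hX]
      congr 1
      omega
    rw [← hg, pow_add, hk]
    field_simp
    linear_combination -(polyZHom A) * huu
  · rintro ⟨m, g, hg⟩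
    have hg' := congrArg polyZHom hg
    simp only [map_mul, map_pow, polyZHom_X] at hg'
    refine ⟨m + (-k).toNat, (u : ℤ[X]) * X ^ k.toNat * g, ?_⟩
    rw [← polyZHom_apply]
    simp only [map_mul, map_pow, polyZHom_X, map_intCast]
    have hk : (RatFunc.X : RatFunc ℚ) ^ k.toNat = RatFunc.X ^ k * RatFunc.X ^ (-k).toNat := by
      rw [← zpow_natCast, ← zpow_natCast, ← zpow_add₀ hX]
      congr 1
      omega
    rw [pow_add, hk]
    field_simp
    linear_combination hg'

theorem add_mul_ne_zero_of_not_isNonPosInt {p : ℤ × ℤ} (hp : p.2 ≠ 0)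
    (h : ¬ IsNonPosInt (ratOf p)) (i : ℕ) : p.1 + p.2 * (i : ℤ) ≠ 0 := by
  intro h0
  refine h ⟨-i, by simp, ?_⟩
  have hQ : (p.2 : ℚ) ≠ 0 := by exact_mod_cast hp
  have h1 : (p.1 : ℚ) + p.2 * i = 0 := by exact_mod_cast h0
  rw [ratOf, div_eq_iff hQ]
  push_cast
  linear_combination h1

theorem X_pow_natAbs_sub_one_ne_zero {m : ℤ} (hm : m ≠ 0) : (X ^ m.natAbs - 1 : ℤ[X]) ≠ 0 :=
  X_pow_sub_C_ne_zero (Int.natAbs_pos.mpr hm) 1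

theorem pochPoly_ne_zero {r s : ℤ} (h : ∀ i : ℕ, r + s * (i : ℤ) ≠ 0) (n : ℕ) :
    pochPoly r s n ≠ 0 :=
  Finset.prod_ne_zero_iff.mpr fun i _ => X_pow_natAbs_sub_one_ne_zero (h i)

theorem rootMultiplicity_X_pow_sub_one {b : ℕ} {ζ : ℂ} (hζ : IsPrimitiveRoot ζ b) {m : ℕ}
    (hm : m ≠ 0) : rootMultiplicity ζ (X ^ m - 1 : ℂ[X]) = if b ∣ m then 1 else 0 := by
  have hsep : (X ^ m - 1 : ℂ[X]).Separable :=
    X_pow_sub_one_separable_iff.mpr (by exact_mod_cast hm)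
  have hne : (X ^ m - 1 : ℂ[X]) ≠ 0 := X_pow_sub_C_ne_zero (Nat.pos_of_ne_zero hm) 1
  rw [← count_roots, Multiset.count_eq_of_nodup (nodup_roots hsep)]
  have : ζ ∈ (X ^ m - 1 : ℂ[X]).roots ↔ b ∣ m := by
    rw [mem_roots hne, ← hζ.pow_eq_one_iff_dvd, IsRoot.def]
    simp [sub_eq_zero]
  simp only [this]

theorem rootMultiplicity_prod {ι : Type*} (S : Finset ι) (f : ι → ℂ[X])
    (h : ∀ i ∈ S, f i ≠ 0) (ζ : ℂ) :
    rootMultiplicity ζ (∏ i ∈ S, f i) = ∑ i ∈ S, rootMultiplicity ζ (f i) := by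
  induction S using Finset.induction_on with
  | empty => simp
  | insert a S ha ih =>
    have hS : ∀ i ∈ S, f i ≠ 0 := fun i hi => h i (by simp [hi])
    rw [Finset.prod_insert ha, Finset.sum_insert ha, rootMultiplicity_mul, ih hS]
    exact mul_ne_zero (h a (by simp)) (Finset.prod_ne_zero_iff.mpr hS)

theorem map_complex_ne_zero {f : ℤ[X]} (hf : f ≠ 0) : f.map (Int.castRingHom ℂ) ≠ 0 :=
  (Polynomial.map_ne_zero_iff Int.cast_injective).mpr hf

theorem rootMultiplicity_pochPoly {b : ℕ} {ζ : ℂ} (hζ : IsPrimitiveRoot ζ b) {r s : ℤ}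
    (h : ∀ i : ℕ, r + s * (i : ℤ) ≠ 0) (n : ℕ) :
    rootMultiplicity ζ ((pochPoly r s n).map (Int.castRingHom ℂ)) = dvdCount b r s n := by
  unfold pochPoly dvdCount
  rw [Polynomial.map_prod, rootMultiplicity_prod, Finset.card_filter]
  · refine Finset.sum_congr rfl fun i _ => ?_
    have e : ((X ^ (r + s * (i : ℤ)).natAbs - 1 : ℤ[X]).map (Int.castRingHom ℂ)) =
        X ^ (r + s * (i : ℤ)).natAbs - 1 := by simp
    rw [e, rootMultiplicity_X_pow_sub_one hζ (Int.natAbs_ne_zero.mpr (h i))]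
    simp only [Int.natCast_dvd]
  · exact fun i _ => map_complex_ne_zero (X_pow_natAbs_sub_one_ne_zero (h i))

theorem pochPoly_eq_prod_cyclotomic {r s : ℤ} (h : ∀ i : ℕ, r + s * (i : ℤ) ≠ 0) (n M : ℕ)
    (hM : ∀ i < n, (r + s * (i : ℤ)).natAbs < M) :
    pochPoly r s n = ∏ d ∈ Finset.Ico 1 M, cyclotomic d ℤ ^ dvdCount d r s n := by
  unfold pochPoly dvdCount
  simp_rw [← Finset.prod_const, Finset.prod_filter]
  rw [Finset.prod_comm]
  refine Finset.prod_congr rfl fun i hi => ?_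
  have hpos := Int.natAbs_pos.mpr (h i)
  rw [← prod_cyclotomic_eq_X_pow_sub_one hpos, ← Finset.prod_filter]
  refine Finset.prod_congr ?_ fun _ _ => rfl
  ext d
  have hlt := hM i (Finset.mem_range.mp hi)
  simp only [Nat.mem_divisors, Finset.mem_filter, Finset.mem_Ico, Int.natCast_dvd]
  constructor
  · rintro ⟨hd, h0⟩
    have := Nat.le_of_dvd hpos hd
    have := Nat.pos_of_dvd_of_pos hd hpos
    exact ⟨⟨by omega, by omega⟩, hd⟩
  · rintro ⟨_, hd⟩
    exact ⟨hd, by omega⟩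

theorem exists_bound_natAbs {ι : Type*} [Fintype ι] (p : ι → ℤ × ℤ) (n : ℕ) :
    ∃ M : ℕ, ∀ j, ∀ i < n, ((p j).1 + (p j).2 * (i : ℤ)).natAbs < M := by
  refine ⟨(∑ j, ∑ i ∈ Finset.range n, ((p j).1 + (p j).2 * (i : ℤ)).natAbs) + 1, fun j i hi => ?_⟩
  refine Nat.lt_succ_of_le ?_
  exact (Finset.single_le_sum (f := fun i : ℕ => ((p j).1 + (p j).2 * (i : ℤ)).natAbs)
      (fun _ _ => Nat.zero_le _) (Finset.mem_range.mpr hi)).trans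
    (Finset.single_le_sum
      (f := fun j => ∑ i ∈ Finset.range n, ((p j).1 + (p j).2 * (i : ℤ)).natAbs)
      (fun _ _ => Nat.zero_le _) (Finset.mem_univ j))

theorem prod_pochPoly_eq_prod_cyclotomic {ι : Type*} [Fintype ι] (p : ι → ℤ × ℤ)
    (h : ∀ j, ∀ i : ℕ, (p j).1 + (p j).2 * (i : ℤ) ≠ 0) (n M : ℕ)
    (hM : ∀ j, ∀ i < n, ((p j).1 + (p j).2 * (i : ℤ)).natAbs < M) :
    ∏ j, pochPoly (p j).1 (p j).2 n =
      ∏ d ∈ Finset.Ico 1 M, cyclotomic d ℤ ^ ∑ j, dvdCount d (p j).1 (p j).2 n := by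
  simp_rw [fun j => pochPoly_eq_prod_cyclotomic (h j) n M (hM j)]
  rw [Finset.prod_comm]
  simp_rw [Finset.prod_pow_eq_pow_sum]

theorem exists_forall_primitiveRoot_rootMultiplicity_eq_zero (C : ℤ[X]) (hC : C ≠ 0) :
    ∃ N : ℕ, 0 < N ∧ ∀ b : ℕ, N ≤ b → ∃ ζ : ℂ, IsPrimitiveRoot ζ b ∧
      rootMultiplicity ζ (C.map (Int.castRingHom ℂ)) = 0 := by
  have hC' := map_complex_ne_zero hC
  let N : ℕ := ((C.map (Int.castRingHom ℂ)).roots.map orderOf).toFinset.sup id + 1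
  refine ⟨N, Nat.succ_pos _, fun b hb => ?_⟩
  have hb0 : b ≠ 0 := by omega
  have hζ := Complex.isPrimitiveRoot_exp b hb0
  refine ⟨_, hζ, ?_⟩
  rw [rootMultiplicity_eq_zero_iff]
  intro hroot
  exfalso
  have hmem : b ∈ ((C.map (Int.castRingHom ℂ)).roots.map orderOf).toFinset := by
    rw [Multiset.mem_toFinset, Multiset.mem_map]
    exact ⟨_, (mem_roots hC').mpr hroot, hζ.eq_orderOf.symm⟩
  have : b ≤ _ := Finset.le_sup (f := id) hmem
  omega

theorem isIntLaurent_pow_mul_qHyp_iff {v w : ℕ} (rr : Fin v → ℤ × ℤ) (tt : Fin w → ℤ × ℤ)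
    (ht : ∀ j, ∀ i : ℕ, (tt j).1 + (tt j).2 * (i : ℤ) ≠ 0) (C : ℤ[X]) (n : ℕ) :
    IsIntLaurent (polyZ C ^ n * qHyp rr tt n) ↔
      ∃ m : ℕ, ∏ j, pochPoly (tt j).1 (tt j).2 n ∣
        X ^ m * (C ^ n * ∏ i, pochPoly (rr i).1 (rr i).2 n) := by
  apply isIntLaurent_iff_dvd
  · exact Finset.prod_ne_zero_iff.mpr fun j _ => pochPoly_ne_zero (ht j) n
  · rw [map_mul, map_pow, map_prod, map_prod, mul_div_assoc, ← polyZHom_apply, qHyp,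
      div_eq_mul_inv, div_eq_mul_inv]
    exact (LaurentAssoc.refl _).mul
      ((LaurentAssoc.prod _ _ _ fun i _ => laurentAssoc_qPoch _ _ _).mul
        (LaurentAssoc.prod _ _ _ fun i _ => laurentAssoc_qPoch _ _ _).inv)

theorem sum_dvdCount_le_of_dvd {v w : ℕ} {rr : Fin v → ℤ × ℤ} {tt : Fin w → ℤ × ℤ}
    (hr : ∀ j, ∀ i : ℕ, (rr j).1 + (rr j).2 * (i : ℤ) ≠ 0)
    (ht : ∀ j, ∀ i : ℕ, (tt j).1 + (tt j).2 * (i : ℤ) ≠ 0)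
    {C : ℤ[X]} (hC : C ≠ 0) {b : ℕ} (hb : b ≠ 0) {ζ : ℂ} (hζ : IsPrimitiveRoot ζ b)
    (hCζ : rootMultiplicity ζ (C.map (Int.castRingHom ℂ)) = 0) {m n : ℕ}
    (hdvd : ∏ j, pochPoly (tt j).1 (tt j).2 n ∣
        X ^ m * (C ^ n * ∏ i, pochPoly (rr i).1 (rr i).2 n)) :
    ∑ j, dvdCount b (tt j).1 (tt j).2 n ≤ ∑ i, dvdCount b (rr i).1 (rr i).2 n := by
  have hmult : ∀ {u : ℕ} (p : Fin u → ℤ × ℤ),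
      (∀ j, ∀ i : ℕ, (p j).1 + (p j).2 * (i : ℤ) ≠ 0) →
      rootMultiplicity ζ ((∏ j, pochPoly (p j).1 (p j).2 n).map (Int.castRingHom ℂ)) =
        ∑ j, dvdCount b (p j).1 (p j).2 n := by
    intro u p hp
    rw [Polynomial.map_prod, rootMultiplicity_prod]
    · exact Finset.sum_congr rfl fun j _ => rootMultiplicity_pochPoly hζ (hp j) n
    · exact fun j _ => map_complex_ne_zero (pochPoly_ne_zero (hp j) n)
  have hA : ∏ i, pochPoly (rr i).1 (rr i).2 n ≠ 0 :=
    Finset.prod_ne_zero_iff.mpr fun j _ => pochPoly_ne_zero (hr j) n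
  have hne : (X ^ m * (C ^ n * ∏ i, pochPoly (rr i).1 (rr i).2 n)).map (Int.castRingHom ℂ) ≠ 0 :=
    map_complex_ne_zero (mul_ne_zero (pow_ne_zero _ X_ne_zero) (mul_ne_zero (pow_ne_zero _ hC) hA))
  have hle := rootMultiplicity_le_rootMultiplicity_of_dvd hne
    (Polynomial.map_dvd (Int.castRingHom ℂ) hdvd) ζ
  rw [hmult tt ht] at hle
  rw [Polynomial.map_mul, Polynomial.map_mul] at hle hne
  rw [rootMultiplicity_mul hne, rootMultiplicity_mul (right_ne_zero_of_mul hne), hmult rr hr] at hle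
  have hXζ : rootMultiplicity ζ ((X ^ m : ℤ[X]).map (Int.castRingHom ℂ)) = 0 := by
    apply rootMultiplicity_eq_zero
    simp [hζ.ne_zero hb]
  have hCn : rootMultiplicity ζ ((C ^ n : ℤ[X]).map (Int.castRingHom ℂ)) = 0 := by
    apply rootMultiplicity_eq_zero
    rw [rootMultiplicity_eq_zero_iff] at hCζ
    intro h
    apply map_complex_ne_zero hC
    apply hCζ
    rw [Polynomial.map_pow, IsRoot.def, eval_pow] at h
    exact eq_zero_of_pow_eq_zero h
  omega

theorem prod_pochPoly_dvd {v w : ℕ} {rr : Fin v → ℤ × ℤ} {tt : Fin w → ℤ × ℤ}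
    (hr : ∀ j, ∀ i : ℕ, (rr j).1 + (rr j).2 * (i : ℤ) ≠ 0)
    (ht : ∀ j, ∀ i : ℕ, (tt j).1 + (tt j).2 * (i : ℤ) ≠ 0) {N n : ℕ}
    (h : ∀ b, N ≤ b → 0 < b →
      ∑ j, dvdCount b (tt j).1 (tt j).2 n ≤ ∑ i, dvdCount b (rr i).1 (rr i).2 n) :
    ∏ j, pochPoly (tt j).1 (tt j).2 n ∣
      (∏ d ∈ Finset.Ico 1 N, cyclotomic d ℤ ^ w) ^ n * ∏ i, pochPoly (rr i).1 (rr i).2 n := by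
  obtain ⟨M₁, hM₁⟩ := exists_bound_natAbs rr n
  obtain ⟨M₂, hM₂⟩ := exists_bound_natAbs tt n
  set M := max N (max M₁ M₂)
  rw [prod_pochPoly_eq_prod_cyclotomic rr hr n M fun j i hi => (hM₁ j i hi).trans_le (by omega),
    prod_pochPoly_eq_prod_cyclotomic tt ht n M fun j i hi => (hM₂ j i hi).trans_le (by omega)]
  have hC : ∏ d ∈ Finset.Ico 1 N, cyclotomic d ℤ ^ w =
      ∏ d ∈ Finset.Ico 1 M, cyclotomic d ℤ ^ (if d < N then w else 0) := by
    rw [← Finset.prod_subset (Finset.Ico_subset_Ico_right (le_max_left N (max M₁ M₂)))]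
    · refine Finset.prod_congr rfl fun d hd => ?_
      rw [if_pos (Finset.mem_Ico.mp hd).2]
    · intro d hd hd'
      simp only [Finset.mem_Ico] at hd hd'
      rw [if_neg (by omega), pow_zero]
  rw [hC, ← Finset.prod_pow, ← Finset.prod_mul_distrib]
  refine Finset.prod_dvd_prod_of_dvd _ _ fun d hd => ?_
  rw [← pow_mul, ← pow_add]
  refine pow_dvd_pow _ ?_
  have hd1 := (Finset.mem_Ico.mp hd).1
  split_ifs with hdN
  · have : ∑ j, dvdCount d (tt j).1 (tt j).2 n ≤ ∑ _j : Fin w, n :=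
      Finset.sum_le_sum fun j _ => dvdCount_le _ _ _ _
    simp only [Finset.sum_const, Finset.card_univ, Fintype.card_fin, smul_eq_mul] at this
    omega
  · simpa using h d (by omega) (by omega)

end

/-- Proposition 4.1: a first criterion for Laurent q-integrality. -/
theorem laurent_integrality_criterion {v w : ℕ} (rr : Fin v → ℤ × ℤ) (tt : Fin w → ℤ × ℤ)
    (hs : ∀ i, (rr i).2 ≠ 0) (hu : ∀ j, (tt j).2 ≠ 0)
    (ht : ∀ j, ¬ IsNonPosInt (ratOf (tt j))) (hr : ∀ i, ¬ IsNonPosInt (ratOf (rr i))) :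
    (∃ C : Polynomial ℤ, C ≠ 0 ∧ ∀ n : ℕ, IsIntLaurent (polyZ C ^ n * qHyp rr tt n)) ↔
      (∃ N : ℕ, ∀ b : ℕ, N ≤ b → ∀ x : ℝ, 0 ≤ x → 0 ≤ qDeltaFn b rr tt x) := by
  have hr0 := fun j => add_mul_ne_zero_of_not_isNonPosInt (hs j) (hr j)
  have ht0 := fun j => add_mul_ne_zero_of_not_isNonPosInt (hu j) (ht j)
  simp only [isIntLaurent_pow_mul_qHyp_iff rr tt ht0]
  constructor
  · rintro ⟨C, hC, hdvd⟩
    obtain ⟨N₁, hN₁⟩ := exists_qDeltaFn_eq_natCast_div rr tt hs hu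
    obtain ⟨N₂, hN₂, hζ⟩ := exists_forall_primitiveRoot_rootMultiplicity_eq_zero C hC
    refine ⟨max N₁ N₂, fun b hb x hx => ?_⟩
    obtain ⟨n, hn⟩ := hN₁ b (by omega) x hx
    obtain ⟨ζ, hprim, hCζ⟩ := hζ b (by omega)
    obtain ⟨m, hm⟩ := hdvd n
    rw [hn, qDeltaFn_natCast_div b (by omega) rr tt hs hu, sub_nonneg]
    exact_mod_cast sum_dvdCount_le_of_dvd hr0 ht0 hC (by omega) hprim hCζ hm
  · rintro ⟨N, hN⟩
    refine ⟨∏ d ∈ Finset.Ico 1 N, cyclotomic d ℤ ^ w, ?_, fun n => ⟨0, ?_⟩⟩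
    · exact Finset.prod_ne_zero_iff.mpr fun d _ => pow_ne_zero _ (cyclotomic_ne_zero d ℤ)
    · rw [pow_zero, one_mul]
      refine prod_pochPoly_dvd hr0 ht0 fun b hb hb0 => ?_
      have := hN b hb ((n : ℝ) / b) (by positivity)
      rw [qDeltaFn_natCast_div b hb0 rr tt hs hu, sub_nonneg] at this
      exact_mod_cast this
end

section
/- Let 𝐫 = ((r_1,s_1),…,(r_v,s_v)) and 𝐭 = ((t_1,u_1),…,(t_w,u_w)) be vectors of pairs of integers such that all s_i, u_j ≠ 0 and all the ratios r_i/s_i and t_j/u_j do not belong to ℤ_{≤0}. Then the following are equivalent: (i) for all but finitely many positive integers b, the function Δ_b^{𝐫,𝐭} is non-negative on ℝ_{≥0}; (ii) for every b ∈ {1, …, d_{𝐫,𝐭}} and all x ∈ ℝ, Ξ_{𝐫,𝐭}(b, x) ≥ 0. -/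
open Polynomial
open scoped Classical

lemma exists_coprime_den_dwork {b : ℕ} (hb : 0 < b) {α : ℚ} (hα : Nat.Coprime α.den b) :
    ∃ θ : ℚ, Nat.Coprime θ.den b ∧
      ∃ k : ℤ, 0 ≤ k ∧ k < (b : ℤ) ∧ (b : ℚ) * θ - α = (k : ℚ) := by
  have hb' : (0 : ℤ) < b := by exact_mod_cast hb
  have hco : IsCoprime (α.den : ℤ) (b : ℤ) := Nat.isCoprime_iff_coprime.2 hα
  obtain ⟨u, v, huv⟩ := hco
  have hdvd : (b : ℤ) ∣ α.num + (-α.num * u % b) * α.den := by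
    have h : (-α.num * u) % b = -α.num * u - b * (-α.num * u / b) := by
      rw [Int.emod_def]
    rw [h]
    exact ⟨α.num * v - (-α.num * u / b) * α.den, by linear_combination (-α.num) * huv⟩
  obtain ⟨m, hm⟩ := hdvd
  have hden : (α.den : ℚ) ≠ 0 := by exact_mod_cast α.den_nz
  refine ⟨(m : ℚ) / (α.den : ℤ), ?_, -α.num * u % b, Int.emod_nonneg _ hb'.ne',
    Int.emod_lt_of_pos _ hb', ?_⟩
  · refine Nat.Coprime.coprime_dvd_left ?_ hα
    have := Rat.den_dvd m α.den
    rw [Rat.divInt_eq_div] at this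
    exact_mod_cast this
  · have hm' : (α.num : ℚ) + ((-α.num * u % b : ℤ) : ℚ) * α.den = b * m := by exact_mod_cast hm
    have hα' := Rat.mul_den_eq_num α
    push_cast
    field_simp
    linarith

lemma dwork_spec_s15 {b : ℕ} (hb : 0 < b) {α : ℚ} (hα : Nat.Coprime α.den b) :
    Nat.Coprime (dwork b α).den b ∧
      ∃ k : ℤ, 0 ≤ k ∧ k < (b : ℤ) ∧ (b : ℚ) * dwork b α - α = (k : ℚ) := by
  have h := exists_coprime_den_dwork hb hα
  rw [dwork, dif_pos h]
  exact h.choose_spec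

lemma cangle_spec (x : ℝ) : 0 < cangle x ∧ cangle x ≤ 1 ∧ ∃ m : ℤ, cangle x = x - m := by
  unfold cangle
  split_ifs with h
  · obtain ⟨m, rfl⟩ := h
    exact ⟨one_pos, le_rfl, m - 1, by push_cast; ring⟩
  · refine ⟨(Int.fract_nonneg x).lt_of_ne fun h0 => h ⟨⌊x⌋, ?_⟩, (Int.fract_lt_one x).le, ⌊x⌋, rfl⟩
    have := Int.floor_add_fract x
    linarith

lemma cangle_eq_of_sub_int {x y : ℝ} (hy0 : 0 < y) (hy1 : y ≤ 1) (m : ℤ) (h : y = x - m) :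
    cangle x = y := by
  obtain ⟨h0, h1, m', hm'⟩ := cangle_spec x
  have e : cangle x - y = ((m - m' : ℤ) : ℝ) := by rw [h, hm']; push_cast; ring
  have l : (-1 : ℝ) < ((m - m' : ℤ) : ℝ) := by rw [← e]; linarith
  have u : ((m - m' : ℤ) : ℝ) < 1 := by rw [← e]; linarith
  have : m - m' = 0 := by
    have l' : -1 < m - m' := by exact_mod_cast l
    have u' : m - m' < 1 := by exact_mod_cast u
    omega
  rw [this] at e
  push_cast at e
  linarith

lemma cangle_sub_intCast {y : ℝ} (hy0 : 0 < y) (hy1 : y ≤ 1) (m : ℤ) : cangle (y - m) = y :=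
  cangle_eq_of_sub_int hy0 hy1 (-m) (by push_cast; ring)

/-- For `b` large with respect to `α = r/s`, the Dwork map sends `α` to `⟨eα⟩`, where `e` is an
inverse of `b` modulo `s`. -/
lemma dwork_eq_cangle {b : ℕ} {r s e : ℤ} (hs : s ≠ 0) (hb : 0 < b) (hco : IsCoprime s (b : ℤ))
    (he : s ∣ b * e - 1) (hα : ¬ IsNonPosInt ((r : ℚ) / s))
    (hn : |⌊1 - (r : ℚ) / s⌋| * |s| < b) :
    ((dwork b ((r : ℚ) / s) : ℚ) : ℝ) = cangle (((e : ℚ) * ((r : ℚ) / s) : ℚ) : ℝ) ∧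
      0 < dwork b ((r : ℚ) / s) + (⌊1 - (r : ℚ) / s⌋ : ℤ) / (b : ℚ) ∧
      dwork b ((r : ℚ) / s) + (⌊1 - (r : ℚ) / s⌋ : ℤ) / (b : ℚ) ≤ 1 := by
  have hsα : (s : ℚ) * ((r : ℚ) / s) = r := by field_simp
  have hαden : Nat.Coprime ((r : ℚ) / s).den b := by
    rw [← Nat.isCoprime_iff_coprime]
    refine hco.of_isCoprime_of_dvd_left ?_
    rw [← Rat.divInt_eq_div]
    exact Rat.den_dvd r s
  set α : ℚ := (r : ℚ) / s
  set n : ℤ := ⌊1 - α⌋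
  obtain ⟨hθ, k, hk0, hkb, hk⟩ := dwork_spec_s15 hb hαden
  set θ : ℚ := dwork b α
  have hbQ : (0 : ℚ) < b := by exact_mod_cast hb
  have hk0' : (0 : ℚ) ≤ k := by exact_mod_cast hk0
  have hkb' : (k : ℚ) ≤ b - 1 := by
    have : k ≤ (b : ℤ) - 1 := by omega
    exact_mod_cast this
  have hn1 : (n : ℚ) ≤ 1 - α := Int.floor_le _
  have hn2 : 1 - α < n + 1 := Int.lt_floor_add_one _
  have hX0 : 0 < b * θ + n := by linarith
  have hX1 : b * θ + n ≤ b := by linarith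
  -- `s * θ` is an integer
  have hθs : (θ.den : ℤ) ∣ s := by
    have hdvd : (θ.den : ℤ) ∣ s * b := by
      have : θ = Rat.divInt (r + s * k) (s * b) := by
        rw [Rat.divInt_eq_div]
        push_cast
        have hsQ : (s : ℚ) ≠ 0 := by exact_mod_cast hs
        field_simp
        linear_combination (s : ℚ) * hk + hsα
      rw [this]
      exact Rat.den_dvd _ _
    exact (Nat.isCoprime_iff_coprime.2 hθ).dvd_of_dvd_mul_right hdvd
  obtain ⟨q, hq⟩ := hθs
  have ht : (s : ℚ) * θ = ((q * θ.num : ℤ) : ℚ) := by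
    rw [hq]; push_cast
    linear_combination (q : ℚ) * Rat.mul_den_eq_num θ
  obtain ⟨t, ht⟩ : ∃ t : ℤ, ((|s| : ℤ) : ℚ) * θ = t := by
    rcases abs_choice s with h | h
    · exact ⟨_, by rw [h]; exact ht⟩
    · exact ⟨-(q * θ.num), by rw [h]; push_cast at ht ⊢; linarith⟩
  have hD : 0 < |s| := abs_pos.2 hs
  have hDQ : (0 : ℚ) < ((|s| : ℤ) : ℚ) := by exact_mod_cast hD
  have hnu : n * |s| < b := lt_of_le_of_lt (mul_le_mul_of_nonneg_right (le_abs_self n) hD.le) hn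
  have hnl : -(b : ℤ) < n * |s| := by
    have := mul_le_mul_of_nonneg_right (neg_abs_le n) hD.le
    linarith
  have hY0 : 0 < b * t + n * |s| := by
    have : 0 < (b : ℚ) * t + n * ((|s| : ℤ) : ℚ) := by
      rw [← ht]; nlinarith
    exact_mod_cast this
  have hY1 : b * t + n * |s| ≤ b * |s| := by
    have : (b : ℚ) * t + n * ((|s| : ℤ) : ℚ) ≤ b * ((|s| : ℤ) : ℚ) := by
      rw [← ht]; nlinarith
    exact_mod_cast this
  have hbZ : (0 : ℤ) < b := by exact_mod_cast hb
  have ht0 : 0 ≤ t := by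
    by_contra! h
    nlinarith
  have ht1 : t ≤ |s| := by
    by_contra! h
    nlinarith
  have ht0' : t ≠ 0 := by
    rintro rfl
    have hθ0 : θ = 0 := by
      rcases mul_eq_zero.1 (ht.trans Int.cast_zero) with h | h
      · exact absurd h hDQ.ne'
      · exact h
    exact hα ⟨-k, by omega, by rw [hθ0] at hk; push_cast; linarith⟩
  have htpos : (0 : ℚ) < t := by exact_mod_cast lt_of_le_of_ne ht0 (Ne.symm ht0')
  have ht1' : (t : ℚ) ≤ ((|s| : ℤ) : ℚ) := by exact_mod_cast ht1
  have hθ0 : 0 < θ := by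
    rw [← ht] at htpos
    exact pos_of_mul_pos_right htpos hDQ.le
  have hθ1 : θ ≤ 1 := by
    rw [← ht] at ht1'
    nlinarith
  have hsum : θ + n / (b : ℚ) = (b * θ + n) / b := by field_simp
  refine ⟨?_, by rw [hsum]; positivity, by rw [hsum, div_le_one hbQ]; exact hX1⟩
  obtain ⟨u, hu⟩ := he
  have hu' : (b : ℚ) * e - 1 = s * u := by exact_mod_cast hu
  symm
  refine cangle_eq_of_sub_int (by exact_mod_cast hθ0) (by exact_mod_cast hθ1)
    (q * θ.num * u - e * k) ?_
  have : θ = (e : ℚ) * α - ((q * θ.num * u - e * k : ℤ) : ℚ) := by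
    have hq' : (s : ℚ) * θ = q * θ.num := by
      rw [hq]; push_cast
      linear_combination (q : ℚ) * Rat.mul_den_eq_num θ
    push_cast
    linear_combination (e : ℚ) * hk - u * hq' - θ * hu'
  exact_mod_cast congrArg (fun z : ℚ => (z : ℝ)) this

lemma cOf_pos {p : ℤ × ℤ} {b : ℕ} (hb : 0 < b) : 0 < cOf p b := Nat.gcd_pos_of_pos_right _ hb

lemma cOf_dvd_fst (p : ℤ × ℤ) (b : ℕ) : (cOf p b : ℤ) ∣ p.1 :=
  (Int.natCast_dvd_natCast.2 (Nat.gcd_dvd_left _ _)).trans (Int.gcd_dvd_left _ _)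

lemma cOf_dvd_snd (p : ℤ × ℤ) (b : ℕ) : (cOf p b : ℤ) ∣ p.2 :=
  (Int.natCast_dvd_natCast.2 (Nat.gcd_dvd_left _ _)).trans (Int.gcd_dvd_right _ _)

lemma cOf_dvd (p : ℤ × ℤ) (b : ℕ) : cOf p b ∣ b := Nat.gcd_dvd_right _ _

lemma gcd_div_cOf_eq_one_iff {p : ℤ × ℤ} {b : ℕ} (hb : 0 < b) :
    Int.gcd (p.2 / (cOf p b : ℤ)) ((b / cOf p b : ℕ) : ℤ) = 1 ↔ inV p b := by
  rw [Int.natCast_div, Int.gcd_div (cOf_dvd_snd p b) (Int.natCast_dvd_natCast.2 (cOf_dvd p b)),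
    Int.natAbs_natCast, inV, Nat.div_eq_iff_eq_mul_left (cOf_pos hb), one_mul]
  · rfl
  · exact Nat.dvd_gcd (Int.natCast_dvd.1 (cOf_dvd_snd p b)) (cOf_dvd p b)

lemma qdelta_of_not_inV {p : ℤ × ℤ} {b : ℕ} (hb : 0 < b) (hV : ¬ inV p b) (x : ℝ) :
    qdelta b p.1 p.2 x = 0 := by
  rw [qdelta, if_neg]
  exact fun h => hV ((gcd_div_cOf_eq_one_iff hb).1 h)

/-- The representative in `(0, 1]` of a jump abscissa. -/
noncomputable def jumpBase (p : ℤ × ℤ) (b : ℕ) (e : ℤ) (k : ℕ) : ℝ :=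
  (cangle (((e : ℚ) * ratOf p : ℚ) : ℝ) + (k : ℝ)) / (cOf p b : ℝ)

lemma jumpPt_eq (p : ℤ × ℤ) (b : ℕ) (a e : ℤ) (k : ℕ) :
    jumpPt p b a e k = jumpBase p b e k - ((⌊1 - (a : ℚ) * ratOf p⌋ : ℤ) : ℝ) := rfl

lemma exists_qdelta_eq_floor {p : ℤ × ℤ} {b : ℕ} {e : ℤ} (hb : 0 < b) (hs : p.2 ≠ 0)
    (hα : ¬ IsNonPosInt (ratOf p)) (hV : inV p b) (he : p.2 ∣ (b : ℤ) * e - (cOf p b : ℤ))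
    (hn : |⌊1 - ratOf p⌋| * |p.2| < b) :
    ∃ y : ℝ, 0 < y ∧ y ≤ 1 ∧
      (∀ k : ℕ, jumpBase p b e k + (⌊1 - ratOf p⌋ : ℤ) / (b : ℝ) = (y + k) / (cOf p b : ℝ)) ∧
      ∀ x : ℝ, qdelta b p.1 p.2 x = ⌊(cOf p b : ℝ) * x - y⌋ + 1 := by
  have hc := cOf_pos (p := p) hb
  have hg := (gcd_div_cOf_eq_one_iff hb).2 hV
  have hq : ∀ x : ℝ, qdelta b p.1 p.2 x = ⌊(cOf p b : ℝ) * x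
        - ((dwork (b / cOf p b) (ratOf p) : ℚ) : ℝ)
        - ((⌊1 - ratOf p⌋ : ℤ) : ℝ) / ((b / cOf p b : ℕ) : ℝ)⌋ + 1 := fun x => by
    rw [qdelta, if_pos]
    · rfl
    · exact hg
  obtain ⟨r', hr'⟩ := cOf_dvd_fst p b
  obtain ⟨s', hs'⟩ := cOf_dvd_snd p b
  obtain ⟨b', hb'⟩ := cOf_dvd p b
  unfold jumpBase
  set c := cOf p b
  have hcZ : (c : ℤ) ≠ 0 := by exact_mod_cast hc.ne'
  have hcQ : (c : ℚ) ≠ 0 := by exact_mod_cast hc.ne'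
  have hcR : (c : ℝ) ≠ 0 := by exact_mod_cast hc.ne'
  have hbc : b / c = b' := by rw [hb']; exact Nat.mul_div_cancel_left _ hc
  have hsc : p.2 / (c : ℤ) = s' := by rw [hs']; exact Int.mul_ediv_cancel_left _ hcZ
  rw [hbc, hsc] at hg
  have hb'0 : 0 < b' := Nat.pos_of_mul_pos_left (hb' ▸ hb)
  have hs'0 : s' ≠ 0 := by rintro rfl; simp at hs'; exact hs hs'
  have hs'Q : (s' : ℚ) ≠ 0 := by exact_mod_cast hs'0
  have hrat : ratOf p = (r' : ℚ) / s' := by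
    rw [ratOf, hr', hs']; push_cast; field_simp
  rw [hrat] at hα hn hq ⊢
  have hbZ : (b : ℤ) = c * b' := by exact_mod_cast hb'
  obtain ⟨h1, h2, h3⟩ := dwork_eq_cangle (e := e) hs'0 hb'0 (Int.isCoprime_iff_gcd_eq_one.2 hg)
    (by
      rw [hbZ, hs', show (c : ℤ) * b' * e - c = c * (b' * e - 1) by ring] at he
      exact Int.dvd_of_mul_dvd_mul_left hcZ he) hα (by
      rw [hbZ, hs', abs_mul, Nat.abs_cast] at hn
      have hcp : (0 : ℤ) < c := by exact_mod_cast hc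
      nlinarith)
  have hbR : (b : ℝ) = c * b' := by exact_mod_cast hb'
  have hb'R : (b' : ℝ) ≠ 0 := by exact_mod_cast hb'0.ne'
  refine ⟨((dwork b' ((r' : ℚ) / s') + (⌊1 - (r' : ℚ) / s'⌋ : ℤ) / (b' : ℚ) : ℚ) : ℝ),
    by exact_mod_cast h2, by exact_mod_cast h3, fun k => ?_, fun x => ?_⟩
  · rw [← h1, hbR]; push_cast; field_simp; ring
  · rw [hq, hbc]; push_cast; rw [sub_sub]

lemma floor_add_one_eq_card {c : ℕ} (hc : 0 < c) {x y : ℝ} (hy0 : 0 < y) (hy1 : y ≤ 1)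
    (hx0 : 0 ≤ x) (hx1 : x ≤ 1) :
    ⌊(c : ℝ) * x - y⌋ + 1 = (((Finset.range c).filter fun k : ℕ => (y + k) / c ≤ x).card : ℤ) := by
  have hcR : (0 : ℝ) < c := by exact_mod_cast hc
  have h0 : -1 ≤ ⌊(c : ℝ) * x - y⌋ := by
    rw [Int.le_floor]; push_cast; nlinarith
  have h1 : ⌊(c : ℝ) * x - y⌋ < c := by
    rw [Int.floor_lt]; push_cast; nlinarith
  have : (Finset.range c).filter (fun k : ℕ => (y + k) / c ≤ x) =
      Finset.range (⌊(c : ℝ) * x - y⌋ + 1).toNat := by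
    ext k
    rw [Finset.mem_filter, Finset.mem_range, Finset.mem_range, div_le_iff₀ hcR,
      Int.lt_toNat, Int.lt_add_one_iff, Int.le_floor]
    push_cast
    refine ⟨fun h => by linarith [h.2], fun h => ⟨?_, by linarith⟩⟩
    have : (k : ℝ) < c := by nlinarith
    exact_mod_cast this
  rw [this, Finset.card_range]
  omega

/-- The number of jumps attached to the pair `p`. -/
noncomputable def jumpCount (p : ℤ × ℤ) (b : ℕ) : ℕ := if inV p b then cOf p b else 0

lemma inV_of_lt_jumpCount {p : ℤ × ℤ} {b k : ℕ} (hk : k < jumpCount p b) :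
    inV p b ∧ k < cOf p b := by
  unfold jumpCount at hk
  split_ifs at hk with h
  · exact ⟨h, hk⟩
  · omega

lemma XiCount_eq (p : ℤ × ℤ) (b : ℕ) (a e : ℤ) (x : ℝ) :
    XiCount p b a e x =
      ((Finset.range (jumpCount p b)).filter fun k => cle (jumpPt p b a e k) x).card := by
  unfold XiCount jumpCount
  split_ifs <;> simp

lemma qdelta_eq_card {p : ℤ × ℤ} {b : ℕ} {e : ℤ} (hb : 0 < b) (hs : p.2 ≠ 0)
    (hα : ¬ IsNonPosInt (ratOf p)) (he : goodChoice p b e)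
    (hn : |⌊1 - ratOf p⌋| * |p.2| < b) {x : ℝ} (hx0 : 0 ≤ x) (hx1 : x ≤ 1) :
    qdelta b p.1 p.2 x = (((Finset.range (jumpCount p b)).filter fun k =>
      jumpBase p b e k + (⌊1 - ratOf p⌋ : ℤ) / (b : ℝ) ≤ x).card : ℤ) := by
  unfold jumpCount
  split_ifs with hV
  · obtain ⟨y, hy0, hy1, hy, hq⟩ := exists_qdelta_eq_floor hb hs hα hV (he hV).2 hn
    simp only [hq, hy]
    exact floor_add_one_eq_card (cOf_pos hb) hy0 hy1 hx0 hx1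
  · simp [qdelta_of_not_inV hb hV]

lemma qdelta_add_natCast {p : ℤ × ℤ} {b : ℕ} {e : ℤ} (hb : 0 < b) (hs : p.2 ≠ 0)
    (hα : ¬ IsNonPosInt (ratOf p)) (he : goodChoice p b e)
    (hn : |⌊1 - ratOf p⌋| * |p.2| < b) (x : ℝ) (m : ℕ) :
    qdelta b p.1 p.2 (x + m) = qdelta b p.1 p.2 x + m * jumpCount p b := by
  unfold jumpCount
  split_ifs with hV
  · obtain ⟨y, -, -, -, hq⟩ := exists_qdelta_eq_floor hb hs hα hV (he hV).2 hn
    rw [hq, hq, show (cOf p b : ℝ) * (x + m) - y = (cOf p b : ℝ) * x - y + ((m * cOf p b : ℤ) : ℝ) by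
      push_cast; ring, Int.floor_add_intCast]
    ring
  · simp [qdelta_of_not_inV hb hV]

lemma jumpBase_mem {p : ℤ × ℤ} {b : ℕ} {e : ℤ} {k : ℕ} (hb : 0 < b) (hk : k < cOf p b) :
    0 < jumpBase p b e k ∧ jumpBase p b e k ≤ 1 := by
  obtain ⟨h0, h1, -⟩ := cangle_spec (((e : ℚ) * ratOf p : ℚ) : ℝ)
  have hc : (0 : ℝ) < cOf p b := by exact_mod_cast cOf_pos hb
  have hk' : (k : ℝ) + 1 ≤ cOf p b := by exact_mod_cast hk
  unfold jumpBase
  exact ⟨by positivity, by rw [div_le_one hc]; linarith⟩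

lemma exists_int_snd_mul_jumpBase {p : ℤ × ℤ} {b : ℕ} (e : ℤ) (k : ℕ) (hb : 0 < b)
    (hs : p.2 ≠ 0) : ∃ m : ℤ, (p.2 : ℝ) * jumpBase p b e k = m := by
  obtain ⟨-, -, m, hm⟩ := cangle_spec (((e : ℚ) * ratOf p : ℚ) : ℝ)
  obtain ⟨r', hr'⟩ := cOf_dvd_fst p b
  obtain ⟨s', hs'⟩ := cOf_dvd_snd p b
  have hc : (cOf p b : ℝ) ≠ 0 := by exact_mod_cast (cOf_pos hb).ne'
  unfold jumpBase
  rw [hm, ratOf]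
  set c := cOf p b
  have hs'0 : (s' : ℝ) ≠ 0 := by
    have : s' ≠ 0 := by rintro rfl; simp at hs'; exact hs hs'
    exact_mod_cast this
  refine ⟨e * r' - s' * m + s' * k, ?_⟩
  rw [hr', hs']
  push_cast
  field_simp

lemma exists_int_mul_jumpBase_sub {p : ℤ × ℤ} {b : ℕ} {e : ℤ} (k : ℕ) (hb : 0 < b)
    (hs : p.2 ≠ 0) (he : p.2 ∣ (b : ℤ) * e - (cOf p b : ℤ)) :
    ∃ m : ℤ, (b : ℝ) * jumpBase p b e k - (ratOf p : ℝ) = m := by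
  obtain ⟨-, -, m, hm⟩ := cangle_spec (((e : ℚ) * ratOf p : ℚ) : ℝ)
  obtain ⟨r', hr'⟩ := cOf_dvd_fst p b
  obtain ⟨b', hb'⟩ := cOf_dvd p b
  obtain ⟨t, ht⟩ := he
  have hc : (cOf p b : ℝ) ≠ 0 := by exact_mod_cast (cOf_pos hb).ne'
  unfold jumpBase
  rw [hm]
  have hα : (p.2 : ℝ) * (ratOf p : ℝ) = p.1 := by
    have : (p.2 : ℝ) ≠ 0 := by exact_mod_cast hs
    rw [ratOf]; push_cast; field_simp
  set c := cOf p b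
  have ht' : (b : ℝ) * e - c = p.2 * t := by exact_mod_cast ht
  have hbR : (b : ℝ) = c * b' := by exact_mod_cast hb'
  have hrR : (p.1 : ℝ) = c * r' := by exact_mod_cast hr'
  refine ⟨t * r' + b' * (k - m), ?_⟩
  have key : (c : ℝ) * ((b' : ℝ) * e - 1) * ratOf p = c * (t * r') := by
    linear_combination (ratOf p : ℝ) * ht' + t * hα + t * hrR - e * (ratOf p : ℝ) * hbR
  have key' := mul_left_cancel₀ hc ((mul_assoc _ _ _).symm.trans key)
  push_cast
  rw [hbR, mul_assoc, mul_div_assoc', mul_div_assoc', mul_div_cancel_left₀ _ hc]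
  linear_combination key'

lemma shifted_le_iff_cle {b a d : ℕ} (hd : 0 < d) (ha : 0 < a) {B B' : ℝ} {α α' : ℚ}
    (hB : 0 < B ∧ B ≤ 1) (hB' : 0 < B' ∧ B' ≤ 1)
    (hdB : ∃ m : ℤ, (d : ℝ) * B = m) (hdB' : ∃ m : ℤ, (d : ℝ) * B' = m)
    (hbB : ∃ m : ℤ, (b : ℝ) * B - (α : ℝ) = m) (hbB' : ∃ m : ℤ, (b : ℝ) * B' - (α' : ℝ) = m)
    (hn : 2 * d * |⌊1 - α⌋| < b) (hn' : 2 * d * |⌊1 - α'⌋| < b) :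
    B + (⌊1 - α⌋ : ℤ) / (b : ℝ) ≤ B' + (⌊1 - α'⌋ : ℤ) / (b : ℝ) ↔
      cle (B - ((⌊1 - (a : ℚ) * α⌋ : ℤ) : ℝ)) (B' - ((⌊1 - (a : ℚ) * α'⌋ : ℤ) : ℝ)) := by
  rw [cle, cangle_sub_intCast hB.1 hB.2, cangle_sub_intCast hB'.1 hB'.2]
  have hbZ : (0 : ℤ) < b := lt_of_le_of_lt (by positivity) hn
  have hb : (0 : ℝ) < b := by exact_mod_cast hbZ
  have hd : (0 : ℝ) < d := by exact_mod_cast hd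
  have strict : ∀ {B B' : ℝ} {n n' : ℤ}, (∃ m : ℤ, (d : ℝ) * B = m) →
      (∃ m : ℤ, (d : ℝ) * B' = m) → 2 * d * |n| < b → 2 * d * |n'| < b → B < B' →
      B + n / (b : ℝ) < B' + n' / (b : ℝ) := by
    rintro B B' n n' ⟨m, hm⟩ ⟨m', hm'⟩ hn hn' hlt
    have hmm : m + 1 ≤ m' := by
      have : (m : ℝ) < m' := by rw [← hm, ← hm']; exact mul_lt_mul_of_pos_left hlt hd
      exact_mod_cast this
    have hmm' : (d : ℝ) * B + 1 ≤ d * B' := by rw [hm, hm']; exact_mod_cast hmm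
    have e1 : 2 * d * (n - n') < 2 * (b : ℤ) := by
      have := mul_le_mul_of_nonneg_left (le_abs_self n) (by positivity : (0 : ℤ) ≤ 2 * d)
      have := mul_le_mul_of_nonneg_left (neg_abs_le n') (by positivity : (0 : ℤ) ≤ 2 * d)
      linarith
    have e2 : (d : ℝ) * (n - n') < b := by
      have : d * (n - n') < (b : ℤ) := by linarith
      exact_mod_cast this
    have e3 : (d : ℝ) * ((n - n') / b) < 1 := by rw [mul_div_assoc', div_lt_one hb]; exact e2
    have e4 : (d : ℝ) * ((n - n') / b) < d * (B' - B) := by linarith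
    have e5 := lt_of_mul_lt_mul_left e4 hd.le
    rw [sub_div] at e5
    linarith
  rcases lt_trichotomy B B' with h | h | h
  · exact iff_of_true (strict hdB hdB' hn hn' h).le (Or.inl h)
  · subst h
    obtain ⟨m, hm⟩ := hbB
    obtain ⟨m', hm'⟩ := hbB'
    have hα : α' = α + (m - m' : ℤ) := by
      have : (α' : ℝ) = α + ((m - m' : ℤ) : ℝ) := by push_cast; linarith
      exact_mod_cast this
    set t := m - m'
    have h1 : ⌊1 - α'⌋ = ⌊1 - α⌋ - t := by
      rw [hα, ← sub_sub, Int.floor_sub_intCast]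
    have h2 : ⌊1 - (a : ℚ) * α'⌋ = ⌊1 - (a : ℚ) * α⌋ - a * t := by
      rw [hα, mul_add, ← sub_sub, ← Int.floor_sub_intCast]
      push_cast
      rfl
    have haR : (0 : ℝ) < a := by exact_mod_cast ha
    rw [h1, h2, add_le_add_iff_left, div_le_div_iff_of_pos_right hb]
    push_cast
    constructor
    · intro h
      have : (a : ℝ) * t ≤ 0 := mul_nonpos_of_nonneg_of_nonpos haR.le (by linarith)
      exact Or.inr ⟨rfl, by linarith⟩
    · rintro (h | ⟨-, h⟩)
      · exact absurd h (lt_irrefl _)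
      · have : (t : ℝ) ≤ 0 := by
          by_contra! h0
          have := mul_pos haR h0
          linarith
        linarith
  · refine iff_of_false (strict hdB' hdB hn' hn h).not_ge ?_
    rintro (h' | ⟨h', -⟩) <;> linarith

/-- The key turning the Christol order into a lexicographic order. -/
noncomputable def cleKey (x : ℝ) : ℝ ×ₗ ℝ := toLex (cangle x, -x)

lemma cle_iff_cleKey {x y : ℝ} : cle x y ↔ cleKey x ≤ cleKey y := by
  simp [cle, cleKey, Prod.Lex.toLex_le_toLex]

lemma Finset.forall_not_le_or_exists_le_iff {τ α β : Type*} [LinearOrder α] [Preorder β]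
    (T : Finset τ) (f : τ → α) (g : τ → β)
    (h : ∀ s ∈ T, ∀ t ∈ T, f s ≤ f t ↔ g s ≤ g t) (y : α) :
    (∀ t ∈ T, ¬ f t ≤ y) ∨ ∃ t₀ ∈ T, ∀ t ∈ T, f t ≤ y ↔ g t ≤ g t₀ := by
  by_cases hT : (T.filter fun t => f t ≤ y).Nonempty
  · obtain ⟨t₀, ht₀, hmax⟩ := Finset.exists_max_image _ f hT
    rw [Finset.mem_filter] at ht₀
    refine Or.inr ⟨t₀, ht₀.1, fun t ht => ?_⟩
    rw [← h t ht t₀ ht₀.1]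
    exact ⟨fun hy => hmax t (Finset.mem_filter.2 ⟨ht, hy⟩), fun hle => hle.trans ht₀.2⟩
  · rw [Finset.not_nonempty_iff_eq_empty, Finset.filter_eq_empty_iff] at hT
    exact Or.inl fun t ht => hT ht

lemma qdelta_sum_nonneg_iff {ι : Type*} [Fintype ι] (P : ι → ℤ × ℤ) (σ : ι → ℤ) (E : ι → ℤ)
    {b a d : ℕ} (hd : 0 < d) (hb : 0 < b) (ha : 0 < a) (hdvd : ∀ i, (P i).2 ∣ (d : ℤ))
    (hs : ∀ i, (P i).2 ≠ 0) (hα : ∀ i, ¬ IsNonPosInt (ratOf (P i)))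
    (hE : ∀ i, goodChoice (P i) b (E i)) (hn : ∀ i, 2 * d * |⌊1 - ratOf (P i)⌋| < b) :
    (∀ x : ℝ, 0 ≤ x → 0 ≤ ∑ i, σ i * qdelta b (P i).1 (P i).2 x) ↔
      ∀ x : ℝ, 0 ≤ ∑ i, σ i * (XiCount (P i) b a (E i) x : ℤ) := by
  have hn' : ∀ i, |⌊1 - ratOf (P i)⌋| * |(P i).2| < b := fun i => by
    have h1 : |(P i).2| ≤ d := Int.le_of_dvd (by exact_mod_cast hd) ((abs_dvd _ _).2 (hdvd i))
    have h2 := mul_le_mul_of_nonneg_left h1 (abs_nonneg ⌊1 - ratOf (P i)⌋)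
    have h3 := mul_nonneg (abs_nonneg ⌊1 - ratOf (P i)⌋) (by positivity : (0 : ℤ) ≤ d)
    linarith [hn i]
  let T : Finset (Σ _ : ι, ℕ) := Finset.univ.sigma fun i => Finset.range (jumpCount (P i) b)
  have hT : ∀ {t : Σ _ : ι, ℕ}, t ∈ T ↔ t.2 < jumpCount (P t.1) b := by simp [T]
  let X : (Σ _ : ι, ℕ) → ℝ := fun t =>
    jumpBase (P t.1) b (E t.1) t.2 + (⌊1 - ratOf (P t.1)⌋ : ℤ) / (b : ℝ)
  let J : (Σ _ : ι, ℕ) → ℝ := fun t => jumpPt (P t.1) b a (E t.1) t.2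
  have hint : ∀ t : Σ _ : ι, ℕ, ∃ m : ℤ, (d : ℝ) * jumpBase (P t.1) b (E t.1) t.2 = m := by
    intro t
    obtain ⟨m, hm⟩ := exists_int_snd_mul_jumpBase (E t.1) t.2 hb (hs t.1)
    obtain ⟨q, hq⟩ := hdvd t.1
    have hq' : (d : ℝ) = (P t.1).2 * q := by exact_mod_cast hq
    exact ⟨q * m, by rw [hq']; push_cast; rw [← hm]; ring⟩
  have hX : ∀ s ∈ T, ∀ t ∈ T, X s ≤ X t ↔ cleKey (J s) ≤ cleKey (J t) := by
    intro s hs' t ht'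
    obtain ⟨hVs, hks⟩ := inV_of_lt_jumpCount (hT.1 hs')
    obtain ⟨hVt, hkt⟩ := inV_of_lt_jumpCount (hT.1 ht')
    rw [← cle_iff_cleKey]
    exact shifted_le_iff_cle hd ha (jumpBase_mem hb hks) (jumpBase_mem hb hkt) (hint s) (hint t)
      (exists_int_mul_jumpBase_sub _ hb (hs _) (hE _ hVs).2)
      (exists_int_mul_jumpBase_sub _ hb (hs _) (hE _ hVt).2) (hn _) (hn _)
  have hX01 : ∀ t ∈ T, 0 < X t ∧ X t ≤ 1 := by
    intro t ht
    obtain ⟨hV, hk⟩ := inV_of_lt_jumpCount (hT.1 ht)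
    obtain ⟨y, hy0, hy1, hy, -⟩ :=
      exists_qdelta_eq_floor hb (hs _) (hα _) hV (hE _ hV).2 (hn' t.1)
    have hc : (0 : ℝ) < cOf (P t.1) b := by exact_mod_cast cOf_pos hb
    have hk' : (t.2 : ℝ) + 1 ≤ cOf (P t.1) b := by exact_mod_cast hk
    simp only [X, hy]
    exact ⟨by positivity, by rw [div_le_one hc]; linarith⟩
  let S : ((Σ _ : ι, ℕ) → Prop) → ℤ := fun p =>
    ∑ i, σ i * (((Finset.range (jumpCount (P i) b)).filter fun k => p ⟨i, k⟩).card : ℤ)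
  have hF : ∀ x : ℝ, 0 ≤ x → x ≤ 1 →
      ∑ i, σ i * qdelta b (P i).1 (P i).2 x = S fun t => X t ≤ x :=
    fun x hx0 hx1 => Finset.sum_congr rfl fun i _ => by
      rw [qdelta_eq_card hb (hs i) (hα i) (hE i) (hn' i) hx0 hx1]
  have hG : ∀ x : ℝ, ∑ i, σ i * (XiCount (P i) b a (E i) x : ℤ) =
      S fun t => cleKey (J t) ≤ cleKey x :=
    fun x => Finset.sum_congr rfl fun i _ => by
      rw [XiCount_eq]
      simp only [cle_iff_cleKey, J]
  have hcongr : ∀ p q : (Σ _ : ι, ℕ) → Prop, (∀ t ∈ T, p t ↔ q t) → S p = S q :=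
    fun p q hpq => Finset.sum_congr rfl fun i _ => by
      rw [Finset.filter_congr fun k hk => hpq ⟨i, k⟩ (hT.2 (Finset.mem_range.1 hk))]
  have hfalse : S (fun _ => False) = 0 := by simp [S]
  have htrue : S (fun _ => True) = ∑ i, σ i * (jumpCount (P i) b : ℤ) := by simp [S]
  constructor
  · intro h x
    rw [hG]
    rcases Finset.forall_not_le_or_exists_le_iff T (fun t => cleKey (J t)) X
      (fun s hs t ht => (hX s hs t ht).symm) (cleKey x) with h0 | ⟨t₀, ht₀, h1⟩
    · rw [hcongr _ (fun _ => False) fun t ht => iff_false_intro (h0 t ht), hfalse]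
    · rw [hcongr _ _ h1, ← hF _ (hX01 t₀ ht₀).1.le (hX01 t₀ ht₀).2]
      exact h _ (hX01 t₀ ht₀).1.le
  · intro h
    have hunit : ∀ x : ℝ, 0 ≤ x → x ≤ 1 → 0 ≤ ∑ i, σ i * qdelta b (P i).1 (P i).2 x := by
      intro x hx0 hx1
      rw [hF x hx0 hx1]
      rcases Finset.forall_not_le_or_exists_le_iff T X (fun t => cleKey (J t)) hX x with
        h0 | ⟨t₀, ht₀, h1⟩
      · rw [hcongr _ (fun _ => False) fun t ht => iff_false_intro (h0 t ht), hfalse]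
      · rw [hcongr _ _ h1, ← hG]
        exact h _
    have htot : 0 ≤ ∑ i, σ i * (jumpCount (P i) b : ℤ) := by
      have h1 := hunit 1 zero_le_one le_rfl
      rw [hF 1 zero_le_one le_rfl,
        hcongr _ (fun _ => True) fun t ht => iff_true_intro (hX01 t ht).2, htrue] at h1
      exact h1
    intro x hx
    have hfl : (0 : ℝ) ≤ Int.fract x := Int.fract_nonneg x
    have hx' : x = Int.fract x + (⌊x⌋₊ : ℝ) := by
      have := Int.floor_add_fract x
      rw [natCast_floor_eq_intCast_floor hx]
      linarith
    have := hunit _ hfl (Int.fract_lt_one x).le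
    rw [hx']
    simp only [fun i => qdelta_add_natCast hb (hs i) (hα i) (hE i) (hn' i) (Int.fract x) ⌊x⌋₊,
      mul_add, Finset.sum_add_distrib, mul_left_comm (σ _) (⌊x⌋₊ : ℤ), ← Finset.mul_sum]
    positivity

lemma cOf_congr {p : ℤ × ℤ} {b b' d : ℕ} (hd : p.2 ∣ (d : ℤ)) (h : b ≡ b' [MOD d]) :
    cOf p b = cOf p b' := by
  have hg : Int.gcd p.1 p.2 ∣ d := Int.natCast_dvd_natCast.1 ((Int.gcd_dvd_right _ _).trans hd)
  unfold cOf
  rw [Nat.gcd_comm, Nat.gcd_comm _ b']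
  exact (h.of_dvd hg).gcd_eq

lemma inV_congr {p : ℤ × ℤ} {b b' d : ℕ} (hd : p.2 ∣ (d : ℤ)) (h : b ≡ b' [MOD d]) :
    inV p b ↔ inV p b' := by
  unfold inV
  rw [cOf_congr hd h, Nat.gcd_comm, Nat.gcd_comm _ b',
    (h.of_dvd (Int.natAbs_dvd_natAbs.2 hd)).gcd_eq]

lemma goodChoice_congr {p : ℤ × ℤ} {b b' d : ℕ} {e : ℤ} (hd : p.2 ∣ (d : ℤ))
    (h : b ≡ b' [MOD d]) (he : goodChoice p b e) : goodChoice p b' e := by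
  intro hV
  obtain ⟨h0, h1⟩ := he ((inV_congr hd h).2 hV)
  refine ⟨h0, ?_⟩
  rw [← cOf_congr hd h]
  have h2 : p.2 ∣ ((b' : ℤ) - b) * e := (hd.trans h.dvd).mul_right e
  rw [show (b' : ℤ) * e - cOf p b = (b * e - cOf p b) + (b' - b) * e by ring]
  exact dvd_add h1 h2

lemma XiCount_congr {p : ℤ × ℤ} {b b' d : ℕ} (hd : p.2 ∣ (d : ℤ)) (h : b ≡ b' [MOD d])
    (a e : ℤ) (x : ℝ) : XiCount p b a e x = XiCount p b' a e x := by
  have hV := inV_congr hd h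
  by_cases hV' : inV p b'
  · simp [XiCount, jumpPt, cOf_congr hd h, hV', hV.2 hV']
  · simp [XiCount, hV', mt hV.1 hV']

lemma exists_goodChoice {p : ℤ × ℤ} (hs : p.2 ≠ 0) (b : ℕ) : ∃ e, goodChoice p b e := by
  by_cases hV : inV p b
  · have hg : ((Int.gcd p.2 b : ℕ) : ℤ) = cOf p b := by exact_mod_cast hV
    rw [Int.gcd_eq_gcd_ab] at hg
    have hs' : 1 ≤ |p.2| := Int.one_le_abs hs
    refine ⟨p.2.gcdB b + |p.2| * (|p.2.gcdB b| + 1), fun _ => ⟨?_, ?_⟩⟩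
    · nlinarith [neg_abs_le (p.2.gcdB b), abs_nonneg (p.2.gcdB b)]
    · rw [← hg, show (b : ℤ) * (p.2.gcdB b + |p.2| * (|p.2.gcdB b| + 1)) -
        (p.2 * p.2.gcdA b + b * p.2.gcdB b) =
        |p.2| * (b * (|p.2.gcdB b| + 1)) - p.2 * p.2.gcdA b by ring]
      exact dvd_sub (((dvd_abs _ _).2 dvd_rfl).mul_right _) (dvd_mul_right _ _)
  · exact ⟨0, fun h => absurd h hV⟩

lemma aOf_pos (d b : ℕ) : 0 < aOf d b := by
  unfold aOf
  split_ifs with h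
  · exact h.choose_spec.1
  · exact one_pos

lemma repMod_spec {d : ℕ} (hd : 0 < d) (b : ℕ) :
    1 ≤ repMod d b ∧ repMod d b ≤ d ∧ repMod d b ≡ b [MOD d] := by
  unfold repMod
  split_ifs with h
  · exact ⟨hd, le_rfl, by simp [Nat.ModEq, h]⟩
  · exact ⟨Nat.pos_of_ne_zero h, (Nat.mod_lt _ hd).le, Nat.mod_modEq _ _⟩

/-- Lemma 5.5: the eventual non-negativity of the Landau functions
`Δ_b^{𝐫,𝐭}` is equivalent to the non-negativity of the finitely many Christol functions
`Ξ_{𝐫,𝐭}(b, ·)`, `b ∈ {1,…,d_{𝐫,𝐭}}`. -/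
theorem delta_nonneg_iff_xi_nonneg {v w : ℕ} (rr : Fin v → ℤ × ℤ) (tt : Fin w → ℤ × ℤ)
    (hs : ∀ i, (rr i).2 ≠ 0) (hu : ∀ j, (tt j).2 ≠ 0)
    (hr : ∀ i, ¬ IsNonPosInt (ratOf (rr i))) (ht : ∀ j, ¬ IsNonPosInt (ratOf (tt j))) :
    (∃ N : ℕ, ∀ b : ℕ, N ≤ b → ∀ x : ℝ, 0 ≤ x → 0 ≤ qDeltaFn b rr tt x) ↔
      (∀ b : ℕ, 1 ≤ b → b ≤ dRT rr tt →
        ∀ (e : Fin v → ℤ) (f : Fin w → ℤ),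
          (∀ i, goodChoice (rr i) b (e i)) → (∀ j, goodChoice (tt j) b (f j)) →
            ∀ x : ℝ, 0 ≤ Xi rr tt b e f x) := by
  set d := dRT rr tt
  have hrd : ∀ i, (rr i).2 ∣ (d : ℤ) := fun i => Int.dvd_natCast.2 <|
    (Finset.dvd_lcm (f := fun i => ((rr i).2).natAbs) (Finset.mem_univ i)).trans
      (Nat.dvd_lcm_left _ _)
  have htd : ∀ j, (tt j).2 ∣ (d : ℤ) := fun j => Int.dvd_natCast.2 <|
    (Finset.dvd_lcm (f := fun j => ((tt j).2).natAbs) (Finset.mem_univ j)).trans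
      (Nat.dvd_lcm_right _ _)
  have hd : 0 < d := by
    refine Nat.lcm_pos (Nat.pos_of_ne_zero ?_) (Nat.pos_of_ne_zero ?_)
    · simp [Finset.lcm_eq_zero_iff, hs]
    · simp [Finset.lcm_eq_zero_iff, hu]
  let P : Fin v ⊕ Fin w → ℤ × ℤ := Sum.elim rr tt
  let σ : Fin v ⊕ Fin w → ℤ := Sum.elim (fun _ => 1) (fun _ => -1)
  have hPd : ∀ i, (P i).2 ∣ (d : ℤ) := Sum.rec hrd htd
  have hPs : ∀ i, (P i).2 ≠ 0 := Sum.rec hs hu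
  have hPα : ∀ i, ¬ IsNonPosInt (ratOf (P i)) := Sum.rec hr ht
  have hΔ : ∀ b x, qDeltaFn b rr tt x = ∑ i, σ i * qdelta b (P i).1 (P i).2 x := fun b x => by
    simp [qDeltaFn, P, σ, Fintype.sum_sum_type, sub_eq_add_neg]
  have hΞ : ∀ b e f x, Xi rr tt b e f x =
      ∑ i, σ i * (XiCount (P i) b (aOf d b : ℕ) (Sum.elim e f i) x : ℤ) := fun b e f x => by
    simp [Xi, P, σ, Fintype.sum_sum_type, sub_eq_add_neg, d]
  obtain ⟨N₀, hN₀⟩ : ∃ N₀ : ℕ, ∀ i, 2 * d * |⌊1 - ratOf (P i)⌋| < (N₀ : ℤ) := by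
    refine ⟨∑ i, 2 * d * ⌊1 - ratOf (P i)⌋.natAbs + 1, fun i => ?_⟩
    have := Finset.single_le_sum (f := fun i => 2 * d * ⌊1 - ratOf (P i)⌋.natAbs)
      (fun _ _ => Nat.zero_le _) (Finset.mem_univ i)
    rw [Int.abs_eq_natAbs]
    exact_mod_cast Nat.lt_succ_of_le this
  -- comparison of a large `b` with a `b₀` in the same class modulo `d`
  have main : ∀ b b₀ : ℕ, 0 < b → N₀ ≤ b → b₀ ≡ b [MOD d] → ∀ e f,
      (∀ i, goodChoice (rr i) b₀ (e i)) → (∀ j, goodChoice (tt j) b₀ (f j)) →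
      ((∀ x : ℝ, 0 ≤ x → 0 ≤ qDeltaFn b rr tt x) ↔ ∀ x : ℝ, 0 ≤ Xi rr tt b₀ e f x) := by
    intro b b₀ hb hNb hmod e f he hf
    have hE : ∀ i, goodChoice (P i) b (Sum.elim e f i) := Sum.rec
      (fun i => goodChoice_congr (hrd i) hmod (he i)) (fun j => goodChoice_congr (htd j) hmod (hf j))
    simp only [hΔ, hΞ, fun i => XiCount_congr (hPd i) hmod]
    exact qdelta_sum_nonneg_iff P σ _ hd hb (aOf_pos d b₀) hPd hPs hPα hE
      fun i => (hN₀ i).trans_le (by exact_mod_cast hNb)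
  constructor
  · rintro ⟨N, hN⟩ b₀ hb₀ - e f he hf
    have hle : N + N₀ ≤ d * (N + N₀) := Nat.le_mul_of_pos_left _ hd
    refine (main (b₀ + d * (N + N₀)) b₀ (by omega) (by omega) ?_ e f he hf).1 (hN _ (by omega))
    simp [Nat.ModEq]
  · intro h
    refine ⟨N₀ + 1, fun b hb => ?_⟩
    obtain ⟨h1, h2, h3⟩ := repMod_spec hd b
    choose e he using fun i => exists_goodChoice (hs i) (repMod d b)
    choose f hf using fun j => exists_goodChoice (hu j) (repMod d b)
    exact (main b (repMod d b) (by omega) (by omega) h3 e f he hf).2 (h _ h1 h2 e f he hf)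
end
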